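/- arXiv:2010.14010 — 8 statements merged into one kernel-verified Lean document; each statement's English description precedes it below -/
import Mathlib

section
/- Let X be a random vector on a probability space and let P be a σ(X)-measurable random variable with values in [0,∞). Then P is a p-variable if and only if there exists a σ(X)-measurable random variable T such that P ≥ ℙ(T' ≤ T | X) almost surely, where T' is a random variable identically distributed as T and independent of X. -/
open MeasureTheory ProbabilityTheory

/-- `P` is a p-variable for the null hypothesis `{μ}`: `ℙ(P ≤ α) ≤ α` for all `α ∈ (0,1)`. -/
def IsPVar {Ω : Type*} [MeasurableSpace Ω] (μ : Measure Ω) (P : Ω → ℝ) : Prop :=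
  ∀ α ∈ Set.Ioo (0:ℝ) 1, μ {ω | P ω ≤ α} ≤ ENNReal.ofReal α

/-- A real random variable independent of `X` with the law `ν` can be built from a uniform random
variable independent of `X`. -/
lemma exists_map_eq_indepFun_of_uniform {Ω E : Type*} [MeasurableSpace Ω] [MeasurableSpace E]
    {μ : Measure Ω} {X : Ω → E} {V : Ω → ℝ} (hV : Measurable V)
    (hVmap : μ.map V = volume.restrict (Set.Icc (0:ℝ) 1)) (hVX : IndepFun V X μ)
    (ν : Measure ℝ) [IsProbabilityMeasure ν] :
    ∃ T : Ω → ℝ, Measurable T ∧ μ.map T = ν ∧ IndepFun T X μ := by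
  obtain ⟨f, hf, hfν⟩ := ν.exists_measurable_map_eq
  have hproj : Measurable (Set.projIcc (0:ℝ) 1 zero_le_one) := continuous_projIcc.measurable
  refine ⟨(f ∘ Set.projIcc (0:ℝ) 1 zero_le_one) ∘ V, (hf.comp hproj).comp hV, ?_,
    hVX.comp (hf.comp hproj) measurable_id⟩
  have hcomp : (f ∘ Set.projIcc (0:ℝ) 1 zero_le_one) ∘ ((↑) : unitInterval → ℝ) = f := by
    ext u
    simp [Set.projIcc_val]
  rw [← Measure.map_map (hf.comp hproj) hV, hVmap,
    ← unitInterval.measurePreserving_coe.map_eq,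
    Measure.map_map (hf.comp hproj) measurable_subtype_coe, hcomp, hfν]

/-- If `T'` is independent of `X` and `T` is `σ(X)`-measurable, then `ℙ(T' ≤ T | X) = F(T)`, where
`F` is the cumulative distribution function of `T'`. -/
lemma condExp_indicator_le_ae_eq_cdf {Ω E : Type*} [MeasurableSpace Ω] [MeasurableSpace E]
    {μ : Measure Ω} [IsProbabilityMeasure μ] {X : Ω → E} (hX : Measurable X) {T T' : Ω → ℝ}
    (hT : Measurable[MeasurableSpace.comap X inferInstance] T) (hT' : Measurable T')
    (hind : IndepFun T' X μ) :
    μ[Set.indicator {ω | T' ω ≤ T ω} (fun _ => (1:ℝ)) | MeasurableSpace.comap X inferInstance]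
      =ᵐ[μ] fun ω => cdf (μ.map T') (T ω) := by
  obtain ⟨g, hg, rfl⟩ := hT.exists_eq_measurable_comp
  have : IsProbabilityMeasure (μ.map T') := Measure.isProbabilityMeasure_map hT'.aemeasurable
  have hs : MeasurableSet {p : E × ℝ | p.2 ≤ g p.1} :=
    measurableSet_le measurable_snd (hg.comp measurable_fst)
  have hdistrib : condDistrib T' X μ =ᵐ[μ.map X] Kernel.const E (μ.map T') :=
    condDistrib_ae_eq_of_measure_eq_compProd_of_measurable hX hT' (by
      rw [Measure.compProd_const]
      exact (indepFun_iff_map_prod_eq_prod_map_map hX.aemeasurable hT'.aemeasurable).1 hind.symm)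
  have hcond := condExp_prod_ae_eq_integral_condDistrib (μ := μ) hX hT'.aemeasurable
    (f := Set.indicator {p : E × ℝ | p.2 ≤ g p.1} (fun _ => (1:ℝ)))
    (stronglyMeasurable_const.indicator hs)
    ((integrable_const (1:ℝ)).indicator (hs.preimage (hX.prodMk hT')))
  refine hcond.trans ?_
  filter_upwards [ae_of_ae_map hX.aemeasurable hdistrib] with ω hω
  rw [hω, cdf_eq_real, Kernel.const_apply]
  exact integral_indicator_one (measurableSet_Iic (a := g (X ω)))

/-- The cumulative distribution function of a law, evaluated at a random point of that law, is
stochastically larger than a uniform random variable. -/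
lemma measure_cdf_le_le (ν : Measure ℝ) [IsProbabilityMeasure ν] (α : ℝ) :
    ν {x | cdf ν x ≤ α} ≤ ENNReal.ofReal α := by
  have hs : MeasurableSet {x | cdf ν x ≤ α} :=
    measurableSet_le (cdf ν).mono.measurable measurable_const
  refine le_of_forall_lt fun r hr => ?_
  obtain ⟨K, hKs, hK, hrK⟩ := hs.exists_lt_isCompact_of_ne_top (measure_ne_top _ _) hr
  have hne : K.Nonempty := nonempty_of_measure_ne_zero (ne_bot_of_gt hrK)
  calc r < ν K := hrK
    _ ≤ ν (Set.Iic (sSup K)) := measure_mono fun x hx => le_csSup hK.bddAbove hx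
    _ = ENNReal.ofReal (cdf ν (sSup K)) := (ofReal_cdf ν _).symm
    _ ≤ ENNReal.ofReal α := ENNReal.ofReal_le_ofReal (hKs (hK.sSup_mem hne))

/-- The cumulative distribution function `F` of a p-variable satisfies `F x ≤ x` for `0 ≤ x`. -/
lemma IsPVar.cdf_le {Ω : Type*} [MeasurableSpace Ω] {μ : Measure Ω} [IsProbabilityMeasure μ]
    {P : Ω → ℝ} (hP : IsPVar μ P) (hPm : Measurable P) {x : ℝ} (hx : 0 ≤ x) :
    cdf (μ.map P) x ≤ x := by
  have : IsProbabilityMeasure (μ.map P) := Measure.isProbabilityMeasure_map hPm.aemeasurable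
  refine le_of_forall_gt_imp_ge_of_dense fun α hα => ?_
  rcases lt_or_ge α 1 with h1 | h1
  · refine (monotone_cdf _ hα.le).trans ?_
    have hα0 : 0 < α := hx.trans_lt hα
    rw [← ENNReal.ofReal_le_ofReal_iff hα0.le, ofReal_cdf,
      Measure.map_apply hPm measurableSet_Iic]
    exact hP α ⟨hα0, h1⟩
  · exact (cdf_le_one _ _).trans h1

/-- **Theorem (probabilistic interpretation of p-values).**
Let `X` be a random vector and `P` a nonnegative `σ(X)`-measurable random variable, on a
probability space rich enough to support a uniform random variable independent of any given
random vector.  Then `P` is a p-variable if and only if there are `T`, `T'` with `T`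
`σ(X)`-measurable, `T'` identically distributed as `T` and independent of `X`, such that
`P ≥ ℙ(T' ≤ T | X)` almost surely. -/
theorem pVar_iff_exists_condProb_le
    {Ω E : Type*} [MeasurableSpace Ω] [MeasurableSpace E]
    (μ : Measure Ω) [IsProbabilityMeasure μ]
    (X : Ω → E) (hX : Measurable X)
    (hrich : ∀ Y : Ω → ℝ × E, Measurable Y →
      ∃ V : Ω → ℝ, Measurable V ∧ μ.map V = volume.restrict (Set.Icc (0:ℝ) 1) ∧
        IndepFun V Y μ)
    (P : Ω → ℝ) (hP : Measurable[MeasurableSpace.comap X inferInstance] P)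
    (hP0 : ∀ ω, 0 ≤ P ω) :
    IsPVar μ P ↔
      ∃ T T' : Ω → ℝ,
        Measurable[MeasurableSpace.comap X inferInstance] T ∧ Measurable T' ∧
        IdentDistrib T' T μ μ ∧ IndepFun T' X μ ∧
        ∀ᵐ ω ∂μ,
          (μ[Set.indicator {ω' | T' ω' ≤ T ω'} (fun _ => (1:ℝ)) |
              MeasurableSpace.comap X inferInstance]) ω ≤ P ω := by
  constructor
  · intro hPVar
    have hPm : Measurable P := hP.mono hX.comap_le le_rfl
    have : IsProbabilityMeasure (μ.map P) := Measure.isProbabilityMeasure_map hPm.aemeasurable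
    obtain ⟨V, hV, hVmap, hVind⟩ := hrich (fun ω => (0, X ω)) (measurable_const.prodMk hX)
    obtain ⟨T', hT', hT'map, hT'ind⟩ := exists_map_eq_indepFun_of_uniform hV hVmap
      (hVind.comp measurable_id measurable_snd : IndepFun V X μ) (μ.map P)
    refine ⟨P, T', hP, hT', ⟨hT'.aemeasurable, hPm.aemeasurable, hT'map⟩, hT'ind, ?_⟩
    filter_upwards [condExp_indicator_le_ae_eq_cdf hX hP hT' hT'ind] with ω hω
    rw [hω, hT'map]
    exact hPVar.cdf_le hPm (hP0 ω)
  · rintro ⟨T, T', hT, hT', hdistrib, hind, hle⟩ α -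
    have hTm : Measurable T := hT.mono hX.comap_le le_rfl
    have : IsProbabilityMeasure (μ.map T) := Measure.isProbabilityMeasure_map hTm.aemeasurable
    calc μ {ω | P ω ≤ α} ≤ μ (T ⁻¹' {x | cdf (μ.map T) x ≤ α}) := by
          refine measure_mono_ae ?_
          filter_upwards [hle, condExp_indicator_le_ae_eq_cdf hX hT hT' hind] with ω hω hcdf hPα
          rw [hcdf, hdistrib.map_eq] at hω
          exact hω.trans hPα
      _ = μ.map T {x | cdf (μ.map T) x ≤ α} := (Measure.map_apply hTm
          (measurableSet_le (cdf _).mono.measurable measurable_const)).symm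
      _ ≤ ENNReal.ofReal α := measure_cdf_le_le _ α
end

section
/- Let X be a random vector on a probability space and let P be a σ(X)-measurable random variable with values in [0,∞). Then P is a p*-variable if and only if there exists a random variable T (not necessarily σ(X)-measurable) such that P ≥ ℙ(T' ≤ T | X) almost surely, where T' is a random variable identically distributed as T and independent of the pair (T, X). -/
open MeasureTheory ProbabilityTheory

/-- `P` is a p*-variable: `E[f(U)] ≤ E[f(P)]` for every increasing concave `f : ℝ → ℝ` for
which both expectations exist, where `U` is uniform on `[0,1]` (i.e. `U ≤₂ P`). -/
def IsPStarVar {Ω : Type*} [MeasurableSpace Ω] (μ : Measure Ω) (P : Ω → ℝ) : Prop :=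
  ∀ f : ℝ → ℝ, Monotone f → ConcaveOn ℝ Set.univ f →
    IntervalIntegrable f volume 0 1 → Integrable (fun ω => f (P ω)) μ →
    ∫ u in (0:ℝ)..1, f u ≤ ∫ ω, f (P ω) ∂μ

section

open Set Filter Topology
open scoped ENNReal

/-- Quantile transform: a finite measure on `ℝ` is the image of Lebesgue measure on
`(0, ν univ)` under a function that is a generalized inverse of `t ↦ ν (Iic t)`. -/
theorem exists_quantile (ν : Measure ℝ) [IsFiniteMeasure ν] :
    ∃ Q : ℝ → ℝ, Measurable Q ∧
      (∀ x ∈ Ioo 0 (ν.real univ), ∀ t, Q x ≤ t ↔ x ≤ ν.real (Iic t)) ∧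
      (volume.restrict (Ioo 0 (ν.real univ))).map Q = ν := by
  classical
  set F : ℝ → ℝ := fun t => ν.real (Iic t)
  have hmono : Monotone F := fun s t hst => measureReal_mono (Iic_subset_Iic.2 hst)
  have hbot : Tendsto F atBot (𝓝 0) := by
    have hI : Tendsto (fun t => ν (Iic t)) atBot (𝓝 (ν (⋂ t, Iic t))) :=
      tendsto_measure_iInter_atBot (fun _ => measurableSet_Iic.nullMeasurableSet)
        (fun _ _ hst => Iic_subset_Iic.2 hst) ⟨0, measure_ne_top _ _⟩
    have hempty : ⋂ t : ℝ, Iic t = ∅ :=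
      eq_empty_of_forall_notMem fun x hx =>
        (sub_one_lt x).not_ge (mem_iInter.1 hx (x - 1))
    rw [hempty] at hI
    simpa [F, measureReal_def, Function.comp_def] using
      (ENNReal.tendsto_toReal (measure_ne_top ν _)).comp hI
  have htop : Tendsto F atTop (𝓝 (ν.real univ)) :=
    (ENNReal.tendsto_toReal (measure_ne_top ν univ)).comp (tendsto_measure_Iic_atTop ν)
  have hright : ∀ t, ContinuousWithinAt F (Ioi t) t := by
    intro t
    have h : Tendsto (fun s => ν (Iic s)) (𝓝[>] t) (𝓝 (ν (⋂ s > t, Iic s))) := by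
      refine tendsto_measure_biInter_gt (fun _ _ => measurableSet_Iic.nullMeasurableSet)
        (fun _ _ _ hij => Iic_subset_Iic.2 hij) ⟨t + 1, by simp, measure_ne_top _ _⟩
    have hI : (⋂ s > t, Iic s) = Iic t := by
      ext x
      simp only [mem_iInter, mem_Iic]
      exact ⟨fun h => le_of_forall_gt_imp_ge_of_dense h, fun h s hs => h.trans hs.le⟩
    rw [hI] at h
    exact (ENNReal.tendsto_toReal (measure_ne_top ν _)).comp h
  let Q : ℝ → ℝ := fun x => if x ∈ Ioo 0 (ν.real univ) then sInf {t | x ≤ F t} else 0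
  have hQ : ∀ x ∈ Ioo 0 (ν.real univ), ∀ t, Q x ≤ t ↔ x ≤ F t := by
    intro x hx t
    have hne : {t | x ≤ F t}.Nonempty :=
      ((htop.eventually (lt_mem_nhds hx.2)).exists).imp fun _ h => h.le
    have hbdd : BddBelow {t | x ≤ F t} := by
      obtain ⟨b, hb⟩ := (hbot.eventually (gt_mem_nhds hx.1)).exists
      exact ⟨b, fun s hs => le_of_not_gt fun h => (hs.trans (hmono h.le)).not_gt hb⟩
    simp only [Q, if_pos hx]
    refine ⟨fun h => ?_, fun h => csInf_le hbdd h⟩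
    refine ge_of_tendsto (hright t) ?_
    filter_upwards [self_mem_nhdsWithin] with s hs
    obtain ⟨r, hr, hrs⟩ := exists_lt_of_csInf_lt hne (h.trans_lt hs)
    exact le_trans hr (hmono hrs.le)
  have hQm : Measurable Q := by
    refine measurable_of_Iic fun t => ?_
    have : Q ⁻¹' Iic t = (Ioo 0 (ν.real univ) ∩ Iic (F t)) ∪
        ((Ioo 0 (ν.real univ))ᶜ ∩ {_x | (0 : ℝ) ≤ t}) := by
      ext x
      by_cases hx : x ∈ Ioo 0 (ν.real univ)
      · have := hQ x hx t
        simp only [mem_preimage, mem_Iic, mem_union, mem_inter_iff, hx, mem_compl_iff, true_and,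
          not_true, false_and, or_false, this]
      · simp only [mem_preimage, mem_Iic, mem_union, mem_inter_iff, hx, mem_compl_iff,
          not_false_iff, false_and, true_and, false_or, Q, mem_ofPred_eq, if_false]
    rw [this]
    exact (measurableSet_Ioo.inter measurableSet_Iic).union
      (measurableSet_Ioo.compl.inter (MeasurableSet.const _))
  refine ⟨Q, hQm, hQ, ?_⟩
  have : IsFiniteMeasure ((volume.restrict (Ioo 0 (ν.real univ))).map Q) := by infer_instance
  refine Measure.ext_of_Iic _ _ fun t => ?_
  rw [Measure.map_apply hQm measurableSet_Iic, Measure.restrict_apply (hQm measurableSet_Iic)]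
  have hset : Q ⁻¹' Iic t ∩ Ioo 0 (ν.real univ) = Iic (F t) ∩ Ioo 0 (ν.real univ) := by
    ext x
    exact and_congr_left fun hx => hQ x hx t
  have hFt : F t ≤ ν.real univ := measureReal_mono (subset_univ _)
  have hae : (Iic (F t) ∩ Ioo 0 (ν.real univ) : Set ℝ) =ᵐ[volume] Ioo 0 (F t) := by
    have h1 : (Iic (F t) : Set ℝ) =ᵐ[volume] Iio (F t) := Iio_ae_eq_Iic.symm
    refine (h1.inter (ae_eq_refl (Ioo 0 (ν.real univ)))).trans (Eq.eventuallyEq ?_)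
    ext x
    exact ⟨fun h => ⟨h.2.1, h.1⟩, fun h => ⟨h.2, h.1, h.2.trans_le hFt⟩⟩
  rw [hset, measure_congr hae, Real.volume_Ioo, sub_zero]
  exact ofReal_measureReal

/-- Two measures whose distribution functions are ordered admit an ordered (partial) coupling. -/
theorem exists_ordered_coupling (σ τ : Measure ℝ) [IsFiniteMeasure σ] [IsFiniteMeasure τ]
    (h : ∀ t, τ (Iic t) ≤ σ (Iic t)) :
    ∃ γ : Measure (ℝ × ℝ), γ.map Prod.fst ≤ σ ∧ γ.map Prod.snd = τ ∧
      ∀ᵐ p ∂γ, p.1 ≤ p.2 := by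
  obtain ⟨Qσ, hQσ, hgσ, hmσ⟩ := exists_quantile σ
  obtain ⟨Qτ, hQτ, hgτ, hmτ⟩ := exists_quantile τ
  have huniv : τ univ ≤ σ univ :=
    le_of_tendsto_of_tendsto' (tendsto_measure_Iic_atTop τ) (tendsto_measure_Iic_atTop σ) h
  have hreal : τ.real univ ≤ σ.real univ := ENNReal.toReal_mono (measure_ne_top _ _) huniv
  refine ⟨(volume.restrict (Ioo 0 (τ.real univ))).map fun x => (Qσ x, Qτ x), ?_, ?_, ?_⟩
  · rw [Measure.map_map measurable_fst (hQσ.prodMk hQτ)]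
    conv_rhs => rw [← hmσ]
    exact Measure.map_mono (Measure.restrict_mono (Ioo_subset_Ioo_right hreal) le_rfl) hQσ
  · rw [Measure.map_map measurable_snd (hQσ.prodMk hQτ)]
    exact hmτ
  · rw [ae_map_iff (hQσ.prodMk hQτ).aemeasurable (measurableSet_le measurable_fst measurable_snd)]
    filter_upwards [ae_restrict_mem measurableSet_Ioo] with x hx
    rw [hgσ x ⟨hx.1, hx.2.trans_le hreal⟩]
    exact ((hgτ x hx _).1 le_rfl).trans (ENNReal.toReal_mono (measure_ne_top _ _) (h _))

theorem withDensity_inv_le_restrict {α : Type*} [MeasurableSpace α] {m ρ : Measure α}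
    {f : α → ℝ≥0∞} (hf : Measurable f) (h : ρ ≤ m.withDensity f) :
    ρ.withDensity (fun x => (f x)⁻¹) ≤ m.restrict {x | f x ≠ 0} := by
  have hS : MeasurableSet {x | f x ≠ 0} := hf (measurableSet_singleton 0).compl
  refine Measure.le_iff.2 fun B hB => ?_
  rw [withDensity_apply _ hB, Measure.restrict_apply hB]
  calc ∫⁻ x in B, (f x)⁻¹ ∂ρ ≤ ∫⁻ x in B, (f x)⁻¹ ∂(m.withDensity f) :=
        lintegral_mono' (Measure.restrict_mono le_rfl h) le_rfl
    _ = ∫⁻ x in B, f x * (f x)⁻¹ ∂m := by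
        rw [setLIntegral_withDensity_eq_setLIntegral_mul _ hf (g := fun x => (f x)⁻¹) hf.inv hB]
        rfl
    _ ≤ ∫⁻ x in B, {x | f x ≠ 0}.indicator 1 x ∂m := by
        refine lintegral_mono fun x => ?_
        by_cases hx : f x = 0
        · simp [hx]
        · simp [indicator, hx, ENNReal.mul_inv_le_one]
    _ = m (B ∩ {x | f x ≠ 0}) := by
        rw [lintegral_indicator_one hS, Measure.restrict_apply hS, inter_comm]

/-- If `q` is increasing and `∫_{(-∞, t]} (q x - x) dm ≥ 0` for all `t`, then there is a
self-coupling `π` of `m` under which the conditional mean of the second coordinate given the first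
one is at most `q`. -/
theorem exists_selfCoupling_mean_le (m : Measure ℝ) [IsFiniteMeasure m] (q : ℝ → ℝ)
    (hq : Measurable q) (hqmono : MonotoneOn q (Ioo 0 1)) (hq01 : ∀ x ∈ Ioo 0 1, q x ∈ Icc 0 1)
    (hm : ∀ᵐ x ∂m, x ∈ Ioo (0 : ℝ) 1)
    (h : ∀ t, ∫⁻ x in Iic t, ENNReal.ofReal (x - q x) ∂m ≤
      ∫⁻ x in Iic t, ENNReal.ofReal (q x - x) ∂m) :
    ∃ π : Measure (ℝ × ℝ), π.map Prod.fst = m ∧ π.map Prod.snd = m ∧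
      ∀ B, MeasurableSet B →
        ∫⁻ p in Prod.fst ⁻¹' B, ENNReal.ofReal p.2 ∂π ≤ ∫⁻ x in B, ENNReal.ofReal (q x) ∂m := by
  set f : ℝ → ℝ≥0∞ := fun x => ENNReal.ofReal (q x - x)
  set g : ℝ → ℝ≥0∞ := fun x => ENNReal.ofReal (x - q x)
  have hfm : Measurable f := (hq.sub measurable_id).ennreal_ofReal
  have hgm : Measurable g := (measurable_id.sub hq).ennreal_ofReal
  have hfin : ∀ k : ℝ → ℝ, (∀ x ∈ Ioo (0 : ℝ) 1, k x ≤ 1) →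
      ∫⁻ x, ENNReal.ofReal (k x) ∂m ≠ ∞ := by
    intro k hk
    refine ne_top_of_le_ne_top (measure_ne_top m univ) ?_
    rw [← lintegral_one]
    exact lintegral_mono_ae (hm.mono fun x hx => by simpa using hk x hx)
  have : IsFiniteMeasure (m.withDensity f) :=
    isFiniteMeasure_withDensity (hfin _ fun x hx => by linarith [hx.1, (hq01 x hx).2])
  have : IsFiniteMeasure (m.withDensity g) :=
    isFiniteMeasure_withDensity (hfin _ fun x hx => by linarith [hx.2, (hq01 x hx).1])
  obtain ⟨γ, hγ1, hγ2, hγle⟩ := exists_ordered_coupling (m.withDensity f) (m.withDensity g)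
    (fun t => by simpa [withDensity_apply _ measurableSet_Iic] using h t)
  have hpos : ∀ {k : ℝ → ℝ≥0∞}, Measurable k → ∀ᵐ x ∂(m.withDensity k),
      x ∈ Ioo (0 : ℝ) 1 ∧ k x ≠ 0 := by
    intro k hk
    rw [ae_withDensity_iff hk]
    exact hm.mono fun x hx h0 => ⟨hx, h0⟩
  have hγ : ∀ᵐ p ∂γ, (0 < p.1 ∧ p.1 < p.2) ∧ f p.1 ≤ ENNReal.ofReal (p.2 - p.1) ∧
      g p.2 ≤ ENNReal.ofReal (p.2 - p.1) := by
    have h1 : ∀ᵐ p ∂γ, p.1 ∈ Ioo (0 : ℝ) 1 ∧ f p.1 ≠ 0 :=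
      ae_of_ae_map measurable_fst.aemeasurable (ae_mono hγ1 (hpos hfm))
    have h2 : ∀ᵐ p ∂γ, p.2 ∈ Ioo (0 : ℝ) 1 ∧ g p.2 ≠ 0 :=
      ae_of_ae_map measurable_snd.aemeasurable (hγ2 ▸ hpos hgm)
    filter_upwards [h1, h2, hγle] with p hp1 hp2 hle
    have a1 : p.1 < q p.1 := by
      simpa [f] using hp1.2
    have a2 : q p.2 < p.2 := by
      simpa [g] using hp2.2
    have a3 := hqmono hp1.1 hp2.1 hle
    refine ⟨⟨hp1.1.1, by linarith⟩, ?_, ?_⟩ <;> exact ENNReal.ofReal_le_ofReal (by linarith)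
  set w : ℝ × ℝ → ℝ≥0∞ := fun p => (ENNReal.ofReal (p.2 - p.1))⁻¹
  have hdm : Measurable fun p : ℝ × ℝ => ENNReal.ofReal (p.2 - p.1) := by fun_prop
  have hwm : Measurable w := hdm.inv
  set γw := γ.withDensity w with hγw
  have hγwpos : ∀ᵐ p ∂γw, 0 < p.1 ∧ p.1 < p.2 :=
    (withDensity_absolutelyContinuous γ w).ae_le (hγ.mono fun p hp => hp.1)
  have hM1 : γw.map Prod.fst ≤ m.restrict {x | f x ≠ 0} := by
    refine le_trans (Measure.le_iff.2 fun B hB => ?_) (withDensity_inv_le_restrict hfm hγ1)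
    rw [Measure.map_apply measurable_fst hB, withDensity_apply _ (measurable_fst hB),
      withDensity_apply _ hB, setLIntegral_map hB (f := fun x => (f x)⁻¹) hfm.inv measurable_fst]
    exact lintegral_mono_ae (ae_restrict_of_ae (hγ.mono fun p hp => ENNReal.inv_le_inv.2 hp.2.1))
  have hM2 : γw.map Prod.snd ≤ m.restrict {x | g x ≠ 0} := by
    refine le_trans (Measure.le_iff.2 fun B hB => ?_) (withDensity_inv_le_restrict hgm hγ2.le)
    rw [Measure.map_apply measurable_snd hB, withDensity_apply _ (measurable_snd hB),
      withDensity_apply _ hB, setLIntegral_map hB (f := fun x => (g x)⁻¹) hgm.inv measurable_snd]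
    exact lintegral_mono_ae (ae_restrict_of_ae (hγ.mono fun p hp => ENNReal.inv_le_inv.2 hp.2.2))
  have hdisj : Disjoint {x | f x ≠ 0} {x | g x ≠ 0} := by
    rw [Set.disjoint_left]
    intro x hx hx'
    have a1 : x < q x := by simpa [f] using hx
    have a2 : q x < x := by simpa [g] using hx'
    exact lt_asymm a1 a2
  have hM : γw.map Prod.fst + γw.map Prod.snd ≤ m := by
    refine (add_le_add hM1 hM2).trans ?_
    rw [← Measure.restrict_union hdisj (hgm (measurableSet_singleton 0).compl)]
    exact Measure.restrict_le_self
  have : IsFiniteMeasure (γw.map Prod.fst + γw.map Prod.snd) := isFiniteMeasure_of_le m hM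
  set ρ := m - (γw.map Prod.fst + γw.map Prod.snd)
  have hρm : ρ + (γw.map Prod.fst + γw.map Prod.snd) = m := Measure.sub_add_cancel_of_le hM
  have hdiag : Measurable fun x : ℝ => (x, x) := measurable_id.prodMk measurable_id
  refine ⟨γw + γw.map Prod.swap + ρ.map (fun x => (x, x)), ?_, ?_, ?_⟩
  · rw [Measure.map_add _ _ measurable_fst, Measure.map_add _ _ measurable_fst,
      Measure.map_map measurable_fst measurable_swap, Measure.map_map measurable_fst hdiag]
    conv_rhs => rw [← hρm, add_comm]
    congr 1
    exact Measure.map_id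
  · rw [Measure.map_add _ _ measurable_snd, Measure.map_add _ _ measurable_snd,
      Measure.map_map measurable_snd measurable_swap, Measure.map_map measurable_snd hdiag]
    conv_rhs => rw [← hρm, add_comm, add_comm (γw.map Prod.fst)]
    congr 1
    exact Measure.map_id
  · intro B hB
    have hB1 : MeasurableSet (Prod.fst ⁻¹' B : Set (ℝ × ℝ)) := measurable_fst hB
    have hB2 : MeasurableSet (Prod.snd ⁻¹' B : Set (ℝ × ℝ)) := measurable_snd hB
    have hmass : ∀ S : Set (ℝ × ℝ), MeasurableSet S →
        ∫⁻ p in S, ENNReal.ofReal (p.2 - p.1) ∂γw = γ S := by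
      intro S hS
      rw [hγw, setLIntegral_withDensity_eq_setLIntegral_mul _ hwm
        hdm hS, ← setLIntegral_one]
      refine lintegral_congr_ae (ae_restrict_of_ae (hγ.mono fun p hp => ?_))
      exact ENNReal.inv_mul_cancel (by simpa using hp.1.2) ENNReal.ofReal_ne_top
    have hsplit : ∀ S : Set (ℝ × ℝ), MeasurableSet S →
        ∫⁻ p in S, ENNReal.ofReal p.2 ∂γw = γ S + ∫⁻ p in S, ENNReal.ofReal p.1 ∂γw := by
      intro S hS
      rw [← hmass S hS, ← lintegral_add_left hdm]
      refine lintegral_congr_ae (ae_restrict_of_ae (hγwpos.mono fun p hp => ?_))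
      beta_reduce
      rw [← ENNReal.ofReal_add (by linarith) hp.1.le, sub_add_cancel]
    have hid : ∫⁻ x in B, ENNReal.ofReal x ∂m = ∫⁻ x in B, ENNReal.ofReal x ∂ρ +
        (∫⁻ p in Prod.fst ⁻¹' B, ENNReal.ofReal p.1 ∂γw +
          ∫⁻ p in Prod.snd ⁻¹' B, ENNReal.ofReal p.2 ∂γw) := by
      conv_lhs => rw [← hρm]
      rw [Measure.restrict_add, lintegral_add_measure, Measure.restrict_add,
        lintegral_add_measure,
        setLIntegral_map hB ENNReal.measurable_ofReal measurable_fst,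
        setLIntegral_map hB ENNReal.measurable_ofReal measurable_snd]
    have hπ : ∫⁻ p in Prod.fst ⁻¹' B, ENNReal.ofReal p.2
          ∂(γw + γw.map Prod.swap + ρ.map (fun x => (x, x))) =
        ∫⁻ p in Prod.fst ⁻¹' B, ENNReal.ofReal p.2 ∂γw +
          ∫⁻ p in Prod.snd ⁻¹' B, ENNReal.ofReal p.1 ∂γw + ∫⁻ x in B, ENNReal.ofReal x ∂ρ := by
      rw [Measure.restrict_add, lintegral_add_measure, Measure.restrict_add,
        lintegral_add_measure,
        setLIntegral_map hB1 measurable_snd.ennreal_ofReal measurable_swap,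
        setLIntegral_map hB1 measurable_snd.ennreal_ofReal hdiag]
      rfl
    have hγB1 : γ (Prod.fst ⁻¹' B) ≤ ∫⁻ x in B, f x ∂m := by
      rw [← withDensity_apply _ hB, ← Measure.map_apply measurable_fst hB]
      exact hγ1 B
    have hγB2 : γ (Prod.snd ⁻¹' B) = ∫⁻ x in B, g x ∂m := by
      rw [← withDensity_apply _ hB, ← Measure.map_apply measurable_snd hB, hγ2]
    have hfg : ∫⁻ x in B, f x ∂m + ∫⁻ x in B, ENNReal.ofReal x ∂m =
        ∫⁻ x in B, ENNReal.ofReal (q x) ∂m + ∫⁻ x in B, g x ∂m := by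
      rw [← lintegral_add_left hfm, ← lintegral_add_right _ hgm]
      refine lintegral_congr_ae (ae_restrict_of_ae (hm.mono fun x hx => ?_))
      have h0 := (hq01 x hx).1
      have hx0 := hx.1.le
      simp only [f, g]
      rcases le_total x (q x) with hxq | hxq
      · rw [ENNReal.ofReal_of_nonpos (sub_nonpos.2 hxq), add_zero,
          ← ENNReal.ofReal_add (sub_nonneg.2 hxq) hx0, sub_add_cancel]
      · rw [ENNReal.ofReal_of_nonpos (sub_nonpos.2 hxq), zero_add,
          ← ENNReal.ofReal_add h0 (sub_nonneg.2 hxq), add_sub_cancel]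
    have hgfin : ∫⁻ x in B, g x ∂m ≠ ∞ := by
      rw [← withDensity_apply _ hB]
      exact measure_ne_top _ _
    rw [← ENNReal.add_le_add_iff_right hgfin, ← hfg]
    calc _ = γ (Prod.fst ⁻¹' B) + ∫⁻ x in B, ENNReal.ofReal x ∂m := by
          rw [hπ, hid, hsplit _ hB1, hsplit _ hB2, ← hγB2]
          ring
      _ ≤ _ := by gcongr

/-- A law `ν` on `[0, 1]` that dominates the uniform law in the increasing concave order is turned
into the uniform law by a randomized map that does not increase conditional means. -/
theorem exists_randomization_mean_le (ν : Measure ℝ) [IsProbabilityMeasure ν]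
    (hν : ∀ᵐ x ∂ν, x ∈ Icc (0 : ℝ) 1)
    (h : ∀ t, ∫ u in Ioo (0 : ℝ) 1, min u t ≤ ∫ x, min x t ∂ν) :
    ∃ F : ℝ → unitInterval → ℝ, Measurable (Function.uncurry F) ∧
      (ν.prod volume).map (Function.uncurry F) = volume.restrict (Ioo (0 : ℝ) 1) ∧
      ∀ᵐ x ∂ν, ∫⁻ v, ENNReal.ofReal (F x v) ≤ ENNReal.ofReal x := by
  obtain ⟨Q, hQm, hQ, hQν⟩ := exists_quantile ν
  rw [probReal_univ] at hQ hQν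
  set m : Measure ℝ := volume.restrict (Ioo (0 : ℝ) 1)
  have hm01 : ∀ᵐ x ∂m, x ∈ Ioo (0 : ℝ) 1 := ae_restrict_mem measurableSet_Ioo
  have hQmono : MonotoneOn Q (Ioo 0 1) := fun x hx y hy hxy =>
    (hQ x hx _).2 (hxy.trans ((hQ y hy _).1 le_rfl))
  have hQ01 : ∀ x ∈ Ioo 0 1, Q x ∈ Icc (0 : ℝ) 1 := by
    intro x hx
    constructor
    · by_contra! hneg
      have hnull : ν (Iic (Q x)) = 0 := by
        refine measure_mono_null (fun y hy => ?_) hν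
        exact fun hy' => (hy.trans_lt hneg).not_ge hy'.1
      have := (hQ x hx _).1 le_rfl
      rw [measureReal_def, hnull] at this
      exact this.not_gt hx.1
    · rw [hQ x hx]
      have hone : ν (Iic 1) = 1 :=
        (mem_ae_iff_prob_eq_one measurableSet_Iic).1 (hν.mono fun y hy => hy.2)
      rw [measureReal_def, hone]
      exact hx.2.le
  have hbdd : ∀ k : ℝ → ℝ, Measurable k → (∀ x ∈ Ioo (0 : ℝ) 1, k x ∈ Icc (0 : ℝ) 1) →
      Integrable k m := fun k hk hk01 =>
    Integrable.of_bound hk.aestronglyMeasurable 1 (hm01.mono fun x hx => by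
      rw [Real.norm_eq_abs, abs_of_nonneg (hk01 x hx).1]
      exact (hk01 x hx).2)
  have hQint : Integrable Q m := hbdd Q hQm hQ01
  have hidint : Integrable (fun x : ℝ => x) m :=
    hbdd _ measurable_id fun x hx => ⟨hx.1.le, hx.2.le⟩
  have hint : Integrable (fun x => Q x - x) m := hQint.sub hidint
  have hdeficit : ∀ t, ∫⁻ x in Iic t, ENNReal.ofReal (x - Q x) ∂m ≤
      ∫⁻ x in Iic t, ENNReal.ofReal (Q x - x) ∂m := by
    intro t
    have hnonneg : 0 ≤ ∫ x in Iic t, (Q x - x) ∂m := by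
      have hQt : ∫ x, min (Q x) t ∂m = ∫ x, min x t ∂ν := by
        rw [← hQν, integral_map hQm.aemeasurable (by fun_prop)]
      have hQtint : Integrable (fun x => min (Q x) t) m := hQint.inf (integrable_const t)
      have htint : Integrable (fun x => min x t) m := hidint.inf (integrable_const t)
      calc 0 ≤ ∫ x, min (Q x) t ∂m - ∫ x, min x t ∂m := by
            rw [hQt]
            exact sub_nonneg.2 (h t)
        _ = ∫ x, (min (Q x) t - min x t) ∂m := (integral_sub hQtint htint).symm
        _ ≤ ∫ x, (Iic t).indicator (fun x => Q x - x) x ∂m := by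
            refine integral_mono (hQtint.sub htint) (hint.indicator measurableSet_Iic) fun x => ?_
            by_cases hx : x ≤ t
            · simp [indicator, hx]
            · simp [indicator, hx, min_eq_right (le_of_not_ge hx)]
        _ = ∫ x in Iic t, (Q x - x) ∂m := integral_indicator measurableSet_Iic
    have hint' := hint.integrableOn (s := Iic t)
    rw [integral_eq_lintegral_pos_part_sub_lintegral_neg_part hint', sub_nonneg,
      ENNReal.toReal_le_toReal] at hnonneg
    · simpa using hnonneg
    · simpa using hint'.neg.lintegral_lt_top.ne
    · exact hint'.lintegral_lt_top.ne
  obtain ⟨π, hπ1, hπ2, hπB⟩ := exists_selfCoupling_mean_le m Q hQm hQmono hQ01 hm01 hdeficit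
  have hmap : Measurable fun p : ℝ × ℝ => (Q p.1, p.2) := by fun_prop
  set ρ := π.map fun p => (Q p.1, p.2) with hρ
  have hρ1 : ρ.fst = ν := by
    rw [Measure.fst, Measure.map_map measurable_fst hmap, ← hQν, ← hπ1,
      Measure.map_map hQm measurable_fst]
    rfl
  have hρ2 : ρ.snd = m := by
    rw [Measure.snd, Measure.map_map measurable_snd hmap, ← hπ2]
    rfl
  have : IsFiniteMeasure ρ := ⟨by
    rw [← Measure.fst_univ, hρ1]
    exact measure_lt_top _ _⟩
  have hdis : ν ⊗ₘ ρ.condKernel = ρ := by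
    rw [← hρ1]
    exact ρ.disintegrate ρ.condKernel
  obtain ⟨F, hF, hFκ⟩ := ρ.condKernel.exists_measurable_map_eq_unitInterval
  have hFx : ∀ x, Measurable (F x) := fun x => hF.of_uncurry_left
  refine ⟨F, hF, ?_, ?_⟩
  · rw [← hρ2, ← hdis]
    ext B hB
    rw [Measure.map_apply hF hB, Measure.prod_apply (hF hB), Measure.snd_apply hB,
      Measure.compProd_apply (measurable_snd hB)]
    refine lintegral_congr fun x => ?_
    exact (Measure.map_apply (hFx x) hB).symm.trans (congrArg (fun η => η B) (hFκ x))
  · have hmeas : Measurable fun x => ∫⁻ v, ENNReal.ofReal (F x v) :=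
      hF.ennreal_ofReal.lintegral_prod_right'
    refine ae_le_of_forall_setLIntegral_le_of_sigmaFinite hmeas fun B hB _ => ?_
    calc ∫⁻ x in B, (∫⁻ v, ENNReal.ofReal (F x v)) ∂ν
        = ∫⁻ x in B, ∫⁻ y in univ, ENNReal.ofReal y ∂(ρ.condKernel x) ∂ν := by
          refine lintegral_congr fun x => ?_
          rw [Measure.restrict_univ, ← hFκ x,
            lintegral_map ENNReal.measurable_ofReal (hFx x)]
      _ = ∫⁻ p in B ×ˢ univ, ENNReal.ofReal p.2 ∂ρ := by
          conv_rhs => rw [← hdis]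
          rw [Measure.setLIntegral_compProd (by fun_prop) hB MeasurableSet.univ]
      _ = ∫⁻ p in Prod.fst ⁻¹' (Q ⁻¹' B), ENNReal.ofReal p.2 ∂π := by
          rw [hρ, setLIntegral_map (hB.prod MeasurableSet.univ) (by fun_prop) hmap]
          congr 2
          ext p
          simp
      _ ≤ ∫⁻ x in Q ⁻¹' B, ENNReal.ofReal (Q x) ∂m := hπB _ (hQm hB)
      _ = ∫⁻ x in B, ENNReal.ofReal x ∂ν := by
          conv_rhs => rw [← hQν, setLIntegral_map hB ENNReal.measurable_ofReal hQm]

/-- Conditioning on `Z` a function of `Z` and of an independent variable `V` amounts to integrating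
out `V`. -/
theorem condExp_comap_ae_eq_integral_of_indepFun {Ω S F : Type*} [MeasurableSpace Ω]
    [MeasurableSpace S] [MeasurableSpace F] {μ : Measure Ω} [IsProbabilityMeasure μ]
    {V : Ω → S} {Z : Ω → F} (hV : Measurable V) (hZ : Measurable Z) (hVZ : IndepFun V Z μ)
    {ψ : F × S → ℝ} (hψ : Measurable ψ) (hψint : Integrable (fun ω => ψ (Z ω, V ω)) μ) :
    μ[fun ω => ψ (Z ω, V ω) | MeasurableSpace.comap Z inferInstance] =ᵐ[μ]
      fun ω => ∫ v, ψ (Z ω, v) ∂(μ.map V) := by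
  have : IsProbabilityMeasure (μ.map V) := Measure.isProbabilityMeasure_map hV.aemeasurable
  have : IsProbabilityMeasure (μ.map Z) := Measure.isProbabilityMeasure_map hZ.aemeasurable
  have hlaw : μ.map (fun ω => (Z ω, V ω)) = (μ.map Z).prod (μ.map V) :=
    hVZ.symm.map_prod_eq_prod_map_map hZ.aemeasurable hV.aemeasurable
  have hmean : StronglyMeasurable fun z => ∫ v, ψ (z, v) ∂(μ.map V) :=
    hψ.stronglyMeasurable.integral_prod_right'
  have hψint' : Integrable ψ ((μ.map Z).prod (μ.map V)) := by
    rwa [← hlaw, integrable_map_measure hψ.aestronglyMeasurable (hZ.prodMk hV).aemeasurable]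
  have hZcomap : Measurable[MeasurableSpace.comap Z inferInstance] Z := comap_measurable Z
  refine (ae_eq_condExp_of_forall_setIntegral_eq hZ.comap_le hψint ?_ ?_ ?_).symm
  · exact fun s _ _ => (hψint'.integral_prod_left.comp_measurable hZ).integrableOn
  · rintro s ⟨C, hC, rfl⟩ _
    rw [← setIntegral_map hC hmean.aestronglyMeasurable hZ.aemeasurable]
    calc _ = ∫ z in C, ∫ v in univ, ψ (z, v) ∂(μ.map V) ∂(μ.map Z) := by
          rw [Measure.restrict_univ]
      _ = ∫ p in C ×ˢ univ, ψ p ∂(μ.map fun ω => (Z ω, V ω)) := by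
          rw [hlaw, setIntegral_prod _ hψint'.integrableOn]
      _ = _ := by
          rw [setIntegral_map (hC.prod MeasurableSet.univ) hψ.aestronglyMeasurable
            (hZ.prodMk hV).aemeasurable, mk_preimage_prod, preimage_univ, inter_univ]
  · exact (hmean.comp_measurable hZcomap).aestronglyMeasurable

/-- If `T'` is independent of `(T, X)`, then `ℙ(T' ≤ T | X) = 𝔼[G(T) | X]`, where `G` is the
distribution function of `T'`. -/
theorem condExp_indicator_le_ae_eq {Ω E : Type*} [MeasurableSpace Ω] [MeasurableSpace E]
    {μ : Measure Ω} [IsProbabilityMeasure μ] {X : Ω → E} (hX : Measurable X) {T T' : Ω → ℝ}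
    (hT : Measurable T) (hT' : Measurable T') (hind : IndepFun T' (fun ω => (T ω, X ω)) μ) :
    μ[indicator {ω | T' ω ≤ T ω} (fun _ => (1 : ℝ)) | MeasurableSpace.comap X inferInstance]
      =ᵐ[μ] μ[fun ω => (μ.map T').real (Iic (T ω)) |
        MeasurableSpace.comap X inferInstance] := by
  have hTX : Measurable fun ω => (T ω, X ω) := hT.prodMk hX
  have hle : MeasurableSpace.comap X inferInstance ≤
      MeasurableSpace.comap (fun ω => (T ω, X ω)) inferInstance := by
    rintro _ ⟨C, hC, rfl⟩
    exact ⟨Prod.snd ⁻¹' C, measurable_snd hC, rfl⟩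
  have hS : MeasurableSet {p : (ℝ × E) × ℝ | p.2 ≤ p.1.1} :=
    measurableSet_le (by fun_prop) (by fun_prop)
  have hψ : Measurable ({p : (ℝ × E) × ℝ | p.2 ≤ p.1.1}.indicator fun _ => (1 : ℝ)) :=
    measurable_const.indicator hS
  have hinner : μ[indicator {ω | T' ω ≤ T ω} (fun _ => (1 : ℝ)) |
      MeasurableSpace.comap (fun ω => (T ω, X ω)) inferInstance] =ᵐ[μ]
        fun ω => (μ.map T').real (Iic (T ω)) := by
    refine (condExp_comap_ae_eq_integral_of_indepFun hT' hTX hind hψ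
      ((integrable_const (1 : ℝ)).indicator (measurableSet_le hT' hT))).trans ?_
    refine Eventually.of_forall fun ω => ?_
    exact integral_indicator_one (μ := μ.map T') (s := Iic (T ω)) measurableSet_Iic
  exact (condExp_condExp_of_le hle hTX.comap_le).symm.trans (condExp_congr_ae hinner)

theorem integral_le_toReal_lintegral_ofReal {α : Type*} [MeasurableSpace α] {m : Measure α}
    (f : α → ℝ) : ∫ x, f x ∂m ≤ (∫⁻ x, ENNReal.ofReal (f x) ∂m).toReal := by
  by_cases hf : Integrable f m
  · rw [integral_eq_lintegral_pos_part_sub_lintegral_neg_part hf]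
    exact sub_le_self _ ENNReal.toReal_nonneg
  · rw [integral_undef hf]
    exact ENNReal.toReal_nonneg

theorem map_projIcc_restrict_Icc :
    (volume.restrict (Icc (0 : ℝ) 1)).map (projIcc (0 : ℝ) 1 zero_le_one) = volume := by
  have h := unitInterval.measurePreserving_coe
  rw [← h.map_eq, Measure.map_map continuous_projIcc.measurable h.measurable]
  have hcomp : projIcc (0 : ℝ) 1 zero_le_one ∘ Subtype.val = id := funext (projIcc_val _)
  exact (congrArg (fun k => Measure.map k volume) hcomp).trans Measure.map_id

theorem volume_restrict_Ioo_real_Iic {t : ℝ} (ht : t ∈ Ioo (0 : ℝ) 1) :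
    (volume.restrict (Ioo (0 : ℝ) 1)).real (Iic t) = t := by
  rw [measureReal_restrict_apply measurableSet_Iic]
  have : Iic t ∩ Ioo (0 : ℝ) 1 = Ioc 0 t := by
    ext x
    exact ⟨fun h => ⟨h.2.1, h.1⟩, fun h => ⟨h.2, h.1, h.2.trans_lt ht.2⟩⟩
  rw [this, Real.volume_real_Ioc_of_le ht.1.le, sub_zero]

/-- Averages over the uniform law increase when `u` is replaced by `G(T)`, where `G` is the
distribution function of `T`. -/
theorem setIntegral_Ioo_le_integral_comp_cdf (ν : Measure ℝ) [IsProbabilityMeasure ν]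
    {f : ℝ → ℝ} (hf : Monotone f) :
    ∫ u in Ioo (0 : ℝ) 1, f u ≤ ∫ t, f (ν.real (Iic t)) ∂ν := by
  obtain ⟨Q, hQm, hQ, hQν⟩ := exists_quantile ν
  rw [probReal_univ] at hQ hQν
  have hG : Measurable fun t => ν.real (Iic t) :=
    Monotone.measurable fun s t hst => measureReal_mono (Iic_subset_Iic.2 hst)
  have hbound : ∀ y ∈ Icc (0 : ℝ) 1, ‖f y‖ ≤ max |f 0| |f 1| := fun y hy =>
    abs_le_max_abs_abs (hf hy.1) (hf hy.2)
  calc ∫ u in Ioo (0 : ℝ) 1, f u ≤ ∫ u in Ioo (0 : ℝ) 1, f (ν.real (Iic (Q u))) := by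
        refine setIntegral_mono_on ?_ ?_ measurableSet_Ioo
          fun u hu => hf ((hQ u hu _).1 le_rfl)
        · exact Integrable.of_bound hf.measurable.aestronglyMeasurable _
            ((ae_restrict_mem measurableSet_Ioo).mono fun u hu => hbound u ⟨hu.1.le, hu.2.le⟩)
        · exact Integrable.of_bound
            (hf.measurable.comp (hG.comp hQm)).aestronglyMeasurable _
            (Eventually.of_forall fun u => hbound _ ⟨measureReal_nonneg, measureReal_le_one⟩)
    _ = ∫ t, f (ν.real (Iic t)) ∂ν := by
        have hmap := integral_map (μ := volume.restrict (Ioo (0 : ℝ) 1)) hQm.aemeasurable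
          (f := fun t => f (ν.real (Iic t))) (hf.measurable.comp hG).aestronglyMeasurable
        rw [hQν] at hmap
        exact hmap.symm

theorem intervalIntegral_zero_one_eq_setIntegral_Ioo (f : ℝ → ℝ) :
    ∫ u in (0 : ℝ)..1, f u = ∫ u in Ioo (0 : ℝ) 1, f u := by
  rw [intervalIntegral.integral_of_le zero_le_one, integral_Ioc_eq_integral_Ioo]

theorem isPStarVar_of_condProb_le {Ω E : Type*} [MeasurableSpace Ω] [MeasurableSpace E]
    {μ : Measure Ω} [IsProbabilityMeasure μ] {X : Ω → E} (hX : Measurable X) {P T T' : Ω → ℝ}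
    (hT : Measurable T) (hT' : Measurable T') (hid : IdentDistrib T' T μ μ)
    (hind : IndepFun T' (fun ω => (T ω, X ω)) μ)
    (hle : μ[indicator {ω | T' ω ≤ T ω} (fun _ => (1 : ℝ)) |
      MeasurableSpace.comap X inferInstance] ≤ᵐ[μ] P) :
    IsPStarVar μ P := by
  intro f hmono hconc _ hint
  have : IsProbabilityMeasure (μ.map T) := Measure.isProbabilityMeasure_map hT.aemeasurable
  set G : ℝ → ℝ := fun t => (μ.map T).real (Iic t)
  have hG01 : ∀ t, G t ∈ Icc (0 : ℝ) 1 := fun t => ⟨measureReal_nonneg, measureReal_le_one⟩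
  have hGm : Measurable G :=
    Monotone.measurable fun s t hst => measureReal_mono (Iic_subset_Iic.2 hst)
  have hGint : Integrable (fun ω => G (T ω)) μ :=
    Integrable.of_bound (hGm.comp hT).aestronglyMeasurable 1 (Eventually.of_forall fun ω => by
      rw [Real.norm_eq_abs, abs_of_nonneg (hG01 _).1]
      exact (hG01 _).2)
  set Q := μ[fun ω => G (T ω) | MeasurableSpace.comap X inferInstance]
  have hQP : Q ≤ᵐ[μ] P := by
    have h := condExp_indicator_le_ae_eq hX hT hT' hind
    rw [hid.map_eq] at h
    exact h.symm.trans_le hle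
  have hQ01 : ∀ᵐ ω ∂μ, Q ω ∈ Icc (0 : ℝ) 1 := by
    have h0 : 0 ≤ᵐ[μ] Q := condExp_nonneg (Eventually.of_forall fun ω => (hG01 _).1)
    have h1 : Q ≤ᵐ[μ] μ[fun _ => (1 : ℝ) | MeasurableSpace.comap X inferInstance] :=
      condExp_mono hGint (integrable_const 1) (Eventually.of_forall fun ω => (hG01 _).2)
    rw [condExp_const hX.comap_le] at h1
    filter_upwards [h0, h1] with ω a b using ⟨a, b⟩
  have hbound : ∀ y ∈ Icc (0 : ℝ) 1, ‖f y‖ ≤ max |f 0| |f 1| := fun y hy =>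
    abs_le_max_abs_abs (hmono hy.1) (hmono hy.2)
  have hfG : Integrable (f ∘ fun ω => G (T ω)) μ :=
    Integrable.of_bound (hmono.measurable.comp (hGm.comp hT)).aestronglyMeasurable _
      (Eventually.of_forall fun ω => hbound _ (hG01 _))
  have hfQ : Integrable (f ∘ Q) μ :=
    Integrable.of_bound (hmono.measurable.comp
      (stronglyMeasurable_condExp.mono hX.comap_le).measurable).aestronglyMeasurable _
      (hQ01.mono fun ω hω => hbound _ hω)
  have hcont : Continuous f := by
    simpa [continuousOn_univ] using hconc.continuousOn_interior
  calc ∫ u in (0 : ℝ)..1, f u = ∫ u in Ioo (0 : ℝ) 1, f u :=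
        intervalIntegral_zero_one_eq_setIntegral_Ioo f
    _ ≤ ∫ t, f (G t) ∂(μ.map T) := setIntegral_Ioo_le_integral_comp_cdf (μ.map T) hmono
    _ = ∫ ω, (f ∘ fun ω => G (T ω)) ω ∂μ :=
        integral_map hT.aemeasurable (hmono.measurable.comp hGm).aestronglyMeasurable
    _ = ∫ ω, (μ[f ∘ fun ω => G (T ω) | MeasurableSpace.comap X inferInstance]) ω ∂μ :=
        (integral_condExp hX.comap_le).symm
    _ ≤ ∫ ω, (f ∘ Q) ω ∂μ :=
        integral_mono_ae integrable_condExp hfQ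
          (hconc.condExp_map_le_univ hX.comap_le hcont.upperSemicontinuous hGint hfG)
    _ ≤ ∫ ω, f (P ω) ∂μ := integral_mono_ae hfQ hint (hQP.mono fun ω hω => hmono hω)

theorem IsPStarVar.integral_min_le {Ω : Type*} [MeasurableSpace Ω] {μ : Measure Ω}
    [IsProbabilityMeasure μ] {P : Ω → ℝ} (h : IsPStarVar μ P) (hP : Measurable P)
    (hP0 : ∀ ω, 0 ≤ P ω) (t : ℝ) :
    ∫ u in Ioo (0 : ℝ) 1, min u t ≤ ∫ ω, min (min (P ω) 1) t ∂μ := by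
  have hcont : Continuous fun x : ℝ => min (min x 1) t := by fun_prop
  have hle := h (fun x => min (min x 1) t)
    (fun x y hxy => min_le_min_right t (min_le_min_right 1 hxy))
    (((concaveOn_id convex_univ).inf (concaveOn_const 1 convex_univ)).inf
      (concaveOn_const t convex_univ))
    (hcont.intervalIntegrable 0 1)
    (Integrable.of_bound (hcont.measurable.comp hP).aestronglyMeasurable (1 + |t|)
      (Eventually.of_forall fun ω => by
        have := hP0 ω
        rw [Real.norm_eq_abs, abs_le]
        constructor
        · refine le_min (le_min ?_ ?_) ?_ <;> linarith [neg_abs_le t, abs_nonneg t]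
        · exact (min_le_left _ _).trans ((min_le_right _ _).trans (by linarith [abs_nonneg t]))))
  rw [intervalIntegral_zero_one_eq_setIntegral_Ioo] at hle
  refine le_trans (setIntegral_congr_fun measurableSet_Ioo fun u hu => ?_).le hle
  simp only [min_eq_left hu.2.le]

theorem IsPStarVar.exists_uniform_condExp_le {Ω E : Type*} [MeasurableSpace Ω]
    [MeasurableSpace E] {μ : Measure Ω} [IsProbabilityMeasure μ] {X : Ω → E} (hX : Measurable X)
    {V : Ω → ℝ} (hV : Measurable V) (hVlaw : μ.map V = volume.restrict (Icc (0 : ℝ) 1))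
    (hVX : IndepFun V X μ) {P : Ω → ℝ}
    (hP : Measurable[MeasurableSpace.comap X inferInstance] P) (hP0 : ∀ ω, 0 ≤ P ω)
    (h : IsPStarVar μ P) :
    ∃ T : Ω → ℝ, Measurable T ∧ μ.map T = volume.restrict (Ioo (0 : ℝ) 1) ∧
      μ[T | MeasurableSpace.comap X inferInstance] ≤ᵐ[μ] P := by
  obtain ⟨p, hp, rfl⟩ := hP.exists_eq_measurable_comp
  set p₁ : E → ℝ := fun x => min (p x) 1
  have hp₁m : Measurable p₁ := hp.min measurable_const
  have hPm : Measurable fun ω => p₁ (X ω) := hp₁m.comp hX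
  set ν := μ.map fun ω => p₁ (X ω) with hν
  have : IsProbabilityMeasure ν := Measure.isProbabilityMeasure_map hPm.aemeasurable
  obtain ⟨F, hF, hFlaw, hFmean⟩ := exists_randomization_mean_le ν
    ((ae_map_iff hPm.aemeasurable measurableSet_Icc).2
      (Eventually.of_forall fun ω => ⟨le_min (hP0 ω) zero_le_one, min_le_right _ _⟩))
    (fun t => by
      rw [hν, integral_map hPm.aemeasurable (by fun_prop)]
      exact h.integral_min_le (hp.comp hX) hP0 t)
  set W : Ω → unitInterval := fun ω => projIcc 0 1 zero_le_one (V ω)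
  have hproj : Measurable (projIcc (0 : ℝ) 1 zero_le_one) := continuous_projIcc.measurable
  have hWm : Measurable W := hproj.comp hV
  have hWlaw : μ.map W = volume := by
    rw [← map_projIcc_restrict_Icc, ← hVlaw, Measure.map_map hproj hV]
    rfl
  have hWX : IndepFun W X μ := hVX.comp hproj measurable_id
  have hjoint : μ.map (fun ω => (p₁ (X ω), W ω)) = ν.prod volume := by
    rw [← hWlaw]
    exact (hWX.symm.comp hp₁m measurable_id).map_prod_eq_prod_map_map hPm.aemeasurable
      hWm.aemeasurable
  have hTm : Measurable fun ω => F (p₁ (X ω)) (W ω) := hF.comp (hPm.prodMk hWm)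
  have hTlaw : μ.map (fun ω => F (p₁ (X ω)) (W ω)) = volume.restrict (Ioo (0 : ℝ) 1) := by
    rw [← hFlaw, ← hjoint, Measure.map_map hF (hPm.prodMk hWm)]
    rfl
  have hT01 : ∀ᵐ ω ∂μ, F (p₁ (X ω)) (W ω) ∈ Ioo (0 : ℝ) 1 := by
    refine ae_of_ae_map hTm.aemeasurable ?_
    rw [hTlaw]
    exact ae_restrict_mem measurableSet_Ioo
  refine ⟨fun ω => F (p₁ (X ω)) (W ω), hTm, hTlaw, ?_⟩
  have hcond := condExp_comap_ae_eq_integral_of_indepFun hWm hX hWX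
    (ψ := fun z => F (p₁ z.1) z.2)
    (hF.comp ((hp₁m.comp measurable_fst).prodMk measurable_snd))
    (Integrable.of_bound hTm.aestronglyMeasurable 1 (hT01.mono fun ω hω => by
      rw [Real.norm_eq_abs, abs_of_pos hω.1]
      exact hω.2.le))
  rw [hWlaw] at hcond
  filter_upwards [hcond, ae_of_ae_map hPm.aemeasurable hFmean] with ω hω hmean
  rw [hω]
  exact (integral_le_toReal_lintegral_ofReal _).trans
    ((ENNReal.toReal_le_of_le_ofReal (le_min (hP0 ω) zero_le_one) hmean).trans (min_le_left _ _))

end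

/-- **Theorem (probabilistic interpretation of p*-values).**
Let `X` be a random vector and `P` a nonnegative `σ(X)`-measurable random variable, on a
probability space rich enough to support a uniform random variable independent of any given
random vector.  Then `P` is a p*-variable if and only if there are random variables `T`, `T'`
with `T'` identically distributed as `T` and independent of the pair `(T, X)`, such that
`P ≥ ℙ(T' ≤ T | X)` almost surely. -/
theorem pStarVar_iff_exists_condProb_le
    {Ω E : Type*} [MeasurableSpace Ω] [MeasurableSpace E]
    (μ : Measure Ω) [IsProbabilityMeasure μ]
    (X : Ω → E) (hX : Measurable X)
    (hrich : ∀ Y : Ω → ℝ × E, Measurable Y →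
      ∃ V : Ω → ℝ, Measurable V ∧ μ.map V = volume.restrict (Set.Icc (0:ℝ) 1) ∧
        IndepFun V Y μ)
    (P : Ω → ℝ) (hP : Measurable[MeasurableSpace.comap X inferInstance] P)
    (hP0 : ∀ ω, 0 ≤ P ω) :
    IsPStarVar μ P ↔
      ∃ T T' : Ω → ℝ,
        Measurable T ∧ Measurable T' ∧
        IdentDistrib T' T μ μ ∧ IndepFun T' (fun ω => (T ω, X ω)) μ ∧
        ∀ᵐ ω ∂μ,
          (μ[Set.indicator {ω' | T' ω' ≤ T ω'} (fun _ => (1:ℝ)) |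
              MeasurableSpace.comap X inferInstance]) ω ≤ P ω := by
  constructor
  · intro h
    obtain ⟨V, hV, hVlaw, hVind⟩ := hrich (fun ω => (0, X ω)) (measurable_const.prodMk hX)
    obtain ⟨T, hT, hTlaw, hTP⟩ := IsPStarVar.exists_uniform_condExp_le hX hV hVlaw
      (hVind.comp measurable_id measurable_snd) hP hP0 h
    obtain ⟨T', hT', hT'law, hT'ind⟩ := hrich (fun ω => (T ω, X ω)) (hT.prodMk hX)
    rw [← Measure.restrict_congr_set Ioo_ae_eq_Icc] at hT'law
    refine ⟨T, T', hT, hT', ⟨hT'.aemeasurable, hT.aemeasurable, hT'law.trans hTlaw.symm⟩,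
      hT'ind, ?_⟩
    have hcdf : (fun ω => (μ.map T').real (Set.Iic (T ω))) =ᵐ[μ] T := by
      have h01 : ∀ᵐ ω ∂μ, T ω ∈ Set.Ioo (0 : ℝ) 1 := by
        refine ae_of_ae_map hT.aemeasurable ?_
        rw [hTlaw]
        exact ae_restrict_mem measurableSet_Ioo
      rw [hT'law]
      exact h01.mono fun ω hω => volume_restrict_Ioo_real_Iic hω
    exact ((condExp_indicator_le_ae_eq hX hT hT' hT'ind).trans
      (condExp_congr_ae hcdf)).trans_le hTP
  · rintro ⟨T, T', hT, hT', hid, hind, hle⟩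
    exact isPStarVar_of_condProb_le hX hT hT' hid hind hle
end

section
/- Let P₁, …, P_K be p-variables on a common probability space (with arbitrary dependence) and let λ₁, …, λ_K ≥ 0 with λ₁ + ⋯ + λ_K = 1. Then the convex combination Σ_{k=1}^K λ_k P_k is a p*-variable. -/
open MeasureTheory ProbabilityTheory

/-- A p-variable satisfies `ℙ(P ≤ α) ≤ α` (with `α` clipped at `0`) for every real `α`. -/
lemma IsPVar.measure_le {Ω : Type*} [MeasurableSpace Ω] {μ : Measure Ω} [IsProbabilityMeasure μ]
    {P : Ω → ℝ} (hP : IsPVar μ P) (α : ℝ) : μ {ω | P ω ≤ α} ≤ ENNReal.ofReal α := by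
  rcases le_or_gt 1 α with h1 | h1
  · exact prob_le_one.trans (by simpa using h1)
  rcases lt_or_ge 0 α with h0 | h0
  · exact hP α ⟨h0, h1⟩
  rw [ENNReal.ofReal_of_nonpos h0]
  refine ENNReal.le_of_forall_pos_le_add fun ε hε _ => ?_
  have hmin : min (ε : ℝ) (1 / 2) ∈ Set.Ioo (0 : ℝ) 1 :=
    ⟨lt_min (by exact_mod_cast hε) (by norm_num), (min_le_right _ _).trans_lt (by norm_num)⟩
  calc μ {ω | P ω ≤ α} ≤ μ {ω | P ω ≤ min (ε : ℝ) (1 / 2)} :=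
        measure_mono fun ω hω => le_trans hω (h0.trans hmin.1.le)
    _ ≤ ENNReal.ofReal (min (ε : ℝ) (1 / 2)) := hP _ hmin
    _ ≤ ENNReal.ofReal ε := ENNReal.ofReal_le_ofReal (min_le_left _ _)
    _ = 0 + ε := by simp

/-- A p-variable is almost surely positive. -/
lemma IsPVar.ae_pos {Ω : Type*} [MeasurableSpace Ω] {μ : Measure Ω} [IsProbabilityMeasure μ]
    {P : Ω → ℝ} (hP : IsPVar μ P) : ∀ᵐ ω ∂μ, 0 < P ω := by
  rw [ae_iff]
  simpa using hP.measure_le 0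

/-- Truncating a p-variable at `1` gives a p-variable. -/
lemma IsPVar.min_one {Ω : Type*} [MeasurableSpace Ω] {μ : Measure Ω} {P : Ω → ℝ}
    (hP : IsPVar μ P) : IsPVar μ (fun ω => min (P ω) 1) := by
  intro α hα
  simpa [min_le_iff, not_le.mpr hα.2] using hP α hα

instance isProbabilityMeasure_restrict_Ioc_zero_one :
    IsProbabilityMeasure (volume.restrict (Set.Ioc (0 : ℝ) 1)) := ⟨by simp⟩

/-- A p-variable puts no more mass on a lower set than the uniform distribution does. -/
lemma IsPVar.measure_preimage_le_of_isLowerSet {Ω : Type*} [MeasurableSpace Ω] {μ : Measure Ω}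
    [IsProbabilityMeasure μ] {P : Ω → ℝ} (hP : IsPVar μ P) {L : Set ℝ} (hL : IsLowerSet L) :
    μ (P ⁻¹' L) ≤ volume.restrict (Set.Ioc (0 : ℝ) 1) L := by
  rcases L.eq_empty_or_nonempty with rfl | hne
  · simp
  by_cases hb : BddAbove L
  · have hsub : Set.Iio (sSup L) ⊆ L := fun x hx => by
      obtain ⟨y, hy, hxy⟩ := exists_lt_of_lt_csSup hne hx
      exact hL hxy.le hy
    calc μ (P ⁻¹' L) ≤ min (μ {ω | P ω ≤ sSup L}) 1 :=
          le_min (measure_mono fun ω hω => le_csSup hb hω) prob_le_one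
      _ ≤ min (ENNReal.ofReal (sSup L)) 1 := min_le_min_right _ (hP.measure_le _)
      _ = volume (Set.Ioo 0 (min (sSup L) 1)) := by
          rw [Real.volume_Ioo, sub_zero, ENNReal.ofReal_min, ENNReal.ofReal_one]
      _ ≤ volume (Set.Iio (sSup L) ∩ Set.Ioc 0 1) := measure_mono fun x hx =>
          ⟨hx.2.trans_le (min_le_left _ _), hx.1, (hx.2.trans_le (min_le_right _ _)).le⟩
      _ = volume.restrict (Set.Ioc (0 : ℝ) 1) (Set.Iio (sSup L)) :=
          (Measure.restrict_apply measurableSet_Iio).symm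
      _ ≤ _ := measure_mono hsub
  · have huniv : L = Set.univ := Set.eq_univ_of_forall fun x => by
      obtain ⟨y, hy, hxy⟩ := not_bddAbove_iff.mp hb x
      exact hL hxy.le hy
    rw [huniv, Set.preimage_univ, measure_univ, measure_univ]

/-- A p-variable dominates the uniform distribution in the first stochastic order, in terms of
expectations of monotone functions that are nonnegative on `[0, ∞)`. -/
lemma IsPVar.lintegral_le_lintegral_comp {Ω : Type*} [MeasurableSpace Ω] {μ : Measure Ω}
    [IsProbabilityMeasure μ] {P : Ω → ℝ} (hmeas : Measurable P) (hP : IsPVar μ P) {g : ℝ → ℝ}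
    (hg : Monotone g) (hg0 : 0 ≤ g 0) :
    ∫⁻ u in Set.Ioc (0 : ℝ) 1, ENNReal.ofReal (g u) ≤ ∫⁻ ω, ENNReal.ofReal (g (P ω)) ∂μ := by
  have hgP : Measurable fun ω => g (P ω) := hg.measurable.comp hmeas
  rw [lintegral_eq_lintegral_meas_lt _ _ hg.measurable.aemeasurable,
    lintegral_eq_lintegral_meas_lt _ _ hgP.aemeasurable]
  · refine lintegral_mono fun t => ?_
    have hL : MeasurableSet {u | g u ≤ t} := measurableSet_le hg.measurable measurable_const
    have hlow : IsLowerSet {u | g u ≤ t} := fun a b hab ha => (hg hab).trans ha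
    have hcompl : {u | t < g u} = {u | g u ≤ t}ᶜ := by ext; simp
    have hcompl' : {ω | t < g (P ω)} = (P ⁻¹' {u | g u ≤ t})ᶜ := by ext; simp
    change volume.restrict (Set.Ioc (0 : ℝ) 1) {u | t < g u} ≤ μ {ω | t < g (P ω)}
    rw [hcompl, hcompl', prob_compl_eq_one_sub hL, prob_compl_eq_one_sub (hmeas hL)]
    exact tsub_le_tsub_left (hP.measure_preimage_le_of_isLowerSet hlow) 1
  · filter_upwards [hP.ae_pos] with ω hω
    exact hg0.trans (hg hω.le)
  · filter_upwards [ae_restrict_mem measurableSet_Ioc] with u hu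
    exact hg0.trans (hg hu.1.le)

/-- A monotone function of a p-variable truncated at `1` is integrable. -/
lemma IsPVar.integrable_comp_min_one {Ω : Type*} [MeasurableSpace Ω] {μ : Measure Ω}
    [IsProbabilityMeasure μ] {P : Ω → ℝ} (hmeas : Measurable P) (hP : IsPVar μ P) {f : ℝ → ℝ}
    (hf : Monotone f) : Integrable (fun ω => f (min (P ω) 1)) μ := by
  refine Integrable.of_mem_Icc (f 0) (f 1)
    (hf.measurable.comp (hmeas.min measurable_const)).aemeasurable ?_
  filter_upwards [hP.ae_pos] with ω hω
  exact ⟨hf (le_min hω.le zero_le_one), hf (min_le_right _ _)⟩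

/-- The expectation of a monotone function of a p-variable truncated at `1` is at least its
expectation under the uniform distribution. -/
lemma IsPVar.intervalIntegral_le_integral_comp_min_one {Ω : Type*} [MeasurableSpace Ω]
    {μ : Measure Ω} [IsProbabilityMeasure μ] {P : Ω → ℝ} (hmeas : Measurable P) (hP : IsPVar μ P)
    {f : ℝ → ℝ} (hf : Monotone f) :
    ∫ u in (0 : ℝ)..1, f u ≤ ∫ ω, f (min (P ω) 1) ∂μ := by
  have hfi : Integrable f (volume.restrict (Set.Ioc (0 : ℝ) 1)) :=
    (hf.intervalIntegrable (a := 0) (b := 1)).1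
  have hPi := hP.integrable_comp_min_one hmeas hf
  have hg : Monotone fun u => f u - f 0 := fun a b hab => sub_le_sub_right (hf hab) _
  have hle := hP.min_one.lintegral_le_lintegral_comp (hmeas.min measurable_const) hg (by simp)
  have hu0 : 0 ≤ᵐ[volume.restrict (Set.Ioc (0 : ℝ) 1)] fun u => f u - f 0 := by
    filter_upwards [ae_restrict_mem measurableSet_Ioc] with u hu
    exact sub_nonneg.mpr (hf hu.1.le)
  have hP0 : 0 ≤ᵐ[μ] fun ω => f (min (P ω) 1) - f 0 := by
    filter_upwards [hP.min_one.ae_pos] with ω hω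
    exact sub_nonneg.mpr (hf hω.le)
  have hfi' : Integrable (fun u => f u - f 0) (volume.restrict (Set.Ioc (0 : ℝ) 1)) :=
    hfi.sub (integrable_const _)
  have hPi' : Integrable (fun ω => f (min (P ω) 1) - f 0) μ := hPi.sub (integrable_const _)
  rw [← ofReal_integral_eq_lintegral_ofReal hfi' hu0,
    ← ofReal_integral_eq_lintegral_ofReal hPi' hP0,
    ENNReal.ofReal_le_ofReal_iff (integral_nonneg_of_ae hP0),
    integral_sub hfi (integrable_const _), integral_sub hPi (integrable_const _),
    integral_const, integral_const, probReal_univ, probReal_univ] at hle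
  rw [intervalIntegral.integral_of_le zero_le_one]
  linarith

/-- **Theorem.** A convex combination of (arbitrarily dependent) p-variables is a
p*-variable. -/
theorem isPStarVar_convex_combination
    {Ω : Type*} [MeasurableSpace Ω] (μ : Measure Ω) [IsProbabilityMeasure μ]
    {K : ℕ} (P : Fin K → Ω → ℝ) (hmeas : ∀ k, Measurable (P k))
    (hp : ∀ k, IsPVar μ (P k))
    (w : Fin K → ℝ) (hw : ∀ k, 0 ≤ w k) (hsum : ∑ k, w k = 1) :
    IsPStarVar μ (fun ω => ∑ k, w k * P k ω) := by
  intro f hf hconc _ hint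
  have hi k : Integrable (fun ω => w k * f (min (P k ω) 1)) μ :=
    ((hp k).integrable_comp_min_one (hmeas k) hf).const_mul _
  calc ∫ u in (0 : ℝ)..1, f u = ∑ k, w k * ∫ u in (0 : ℝ)..1, f u := by
        rw [← Finset.sum_mul, hsum, one_mul]
    _ ≤ ∑ k, w k * ∫ ω, f (min (P k ω) 1) ∂μ := Finset.sum_le_sum fun k _ =>
        mul_le_mul_of_nonneg_left
          ((hp k).intervalIntegral_le_integral_comp_min_one (hmeas k) hf) (hw k)
    _ = ∫ ω, ∑ k, w k * f (min (P k ω) 1) ∂μ := by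
        rw [integral_finsetSum _ fun k _ => hi k]
        simp only [integral_const_mul]
    _ ≤ ∫ ω, f (∑ k, w k * P k ω) ∂μ := by
        refine integral_mono (integrable_finsetSum _ fun k _ => hi k) hint fun ω => ?_
        calc ∑ k, w k * f (min (P k ω) 1) ≤ f (∑ k, w k * min (P k ω) 1) := by
              simpa using hconc.le_map_sum (t := Finset.univ) (p := fun k => min (P k ω) 1)
                (fun k _ => hw k) hsum fun k _ => Set.mem_univ _
          _ ≤ f (∑ k, w k * P k ω) := hf <| Finset.sum_le_sum fun k _ =>
              mul_le_mul_of_nonneg_left (min_le_left _ _) (hw k)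
end

section
/- Let T be any random variable and T' an independent copy of T (identically distributed as T and independent of T). Then the random variable P̃ := (1/2)·ℙ(T' ≤ T | T) + (1/2)·ℙ(T' < T | T) is a p*-variable. -/
open MeasureTheory ProbabilityTheory

open Set Filter Topology

/-- The uniform distribution on `[0,1]`. -/
noncomputable abbrev uniformUnit : Measure ℝ := volume.restrict (Icc 0 1)

instance : IsProbabilityMeasure uniformUnit := ⟨by simp⟩

/-- The randomized probability integral transform of `ν`: a point `t` and a weight `w` are sent to
the point dividing the interval `[ν (Iio t), ν (Iic t)]` in the ratio `w : 1 - w`. -/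
noncomputable def randomizedPIT (ν : Measure ℝ) (p : ℝ × ℝ) : ℝ :=
  ν.real (Iio p.1) + p.2 * ν.real {p.1}

lemma measureReal_Iic_eq_Iio_add_singleton (ν : Measure ℝ) [IsFiniteMeasure ν] (t : ℝ) :
    ν.real (Iic t) = ν.real (Iio t) + ν.real {t} := by
  rw [← Iio_union_right, measureReal_union (by simp) (measurableSet_singleton t)]

lemma measurable_measureReal_Iio (ν : Measure ℝ) [IsFiniteMeasure ν] :
    Measurable fun t => ν.real (Iio t) :=
  Monotone.measurable fun _ _ h => measureReal_mono (Iio_subset_Iio h)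

lemma measurable_measureReal_singleton (ν : Measure ℝ) [IsFiniteMeasure ν] :
    Measurable fun t => ν.real {t} := by
  have hIic : Measurable fun t => ν.real (Iic t) :=
    Monotone.measurable fun _ _ h => measureReal_mono (Iic_subset_Iic.2 h)
  have h : (fun t => ν.real {t}) = fun t => ν.real (Iic t) - ν.real (Iio t) := by
    ext t
    rw [measureReal_Iic_eq_Iio_add_singleton]
    ring
  rw [h]
  exact hIic.sub (measurable_measureReal_Iio ν)

lemma measurable_randomizedPIT (ν : Measure ℝ) [IsFiniteMeasure ν] :
    Measurable (randomizedPIT ν) :=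
  ((measurable_measureReal_Iio ν).comp measurable_fst).add
    (measurable_snd.mul ((measurable_measureReal_singleton ν).comp measurable_fst))

lemma randomizedPIT_le (ν : Measure ℝ) [IsFiniteMeasure ν] (t : ℝ) {w : ℝ} (hw : w ≤ 1) :
    randomizedPIT ν (t, w) ≤ ν.real (Iic t) := by
  rw [measureReal_Iic_eq_Iio_add_singleton]
  simpa [randomizedPIT] using mul_le_mul_of_nonneg_right hw (measureReal_nonneg (μ := ν) (s := {t}))

lemma le_randomizedPIT (ν : Measure ℝ) (t : ℝ) {w : ℝ} (hw : 0 ≤ w) :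
    ν.real (Iio t) ≤ randomizedPIT ν (t, w) := by
  simpa [randomizedPIT] using mul_nonneg hw (measureReal_nonneg (μ := ν) (s := {t}))

lemma randomizedPIT_mem_Icc (ν : Measure ℝ) [IsProbabilityMeasure ν] (t : ℝ) {w : ℝ}
    (hw : w ∈ Icc (0 : ℝ) 1) : randomizedPIT ν (t, w) ∈ Icc (0 : ℝ) 1 :=
  ⟨measureReal_nonneg.trans (le_randomizedPIT ν t hw.1),
    (randomizedPIT_le ν t hw.2).trans measureReal_le_one⟩

lemma uniformUnit_Iio {x : ℝ} (hx : x ∈ Icc (0 : ℝ) 1) :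
    uniformUnit (Iio x) = ENNReal.ofReal x := by
  have h : Iio x ∩ Icc 0 1 = Ico 0 x := by
    ext y
    simp only [mem_inter_iff, mem_Iio, mem_Icc, mem_Ico]
    constructor
    · rintro ⟨h1, h2, -⟩
      exact ⟨h2, h1⟩
    · rintro ⟨h1, h2⟩
      exact ⟨h2, h1, h2.le.trans hx.2⟩
  rw [Measure.restrict_apply measurableSet_Iio, h, Real.volume_Ico, sub_zero]

lemma exists_quantile_s4 (ν : Measure ℝ) [IsProbabilityMeasure ν] {v : ℝ} (hv : v ∈ Ioo (0 : ℝ) 1) :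
    ∃ q, ν.real (Iio q) ≤ v ∧ v ≤ ν.real (Iic q) ∧ ∀ t < q, ν.real (Iic t) < v := by
  set S : Set ℝ := {t | v ≤ cdf ν t}
  have hne : S.Nonempty := by
    obtain ⟨t, ht⟩ := ((tendsto_cdf_atTop ν).eventually_const_lt hv.2).exists
    exact ⟨t, ht.le⟩
  have hbdd : BddBelow S := by
    obtain ⟨b, hb⟩ := ((tendsto_cdf_atBot ν).eventually_lt_const hv.1).exists
    refine ⟨b, fun t ht => ?_⟩
    by_contra! htb
    exact absurd ((monotone_cdf ν htb.le).trans_lt hb) (not_lt.2 ht)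
  have hlt : ∀ t < sInf S, cdf ν t < v := fun t ht => by
    by_contra! h
    exact absurd (csInf_le hbdd h) (not_le.2 ht)
  refine ⟨sInf S, ?_, ?_, fun t ht => cdf_eq_real ν t ▸ hlt t ht⟩
  · have h : ν (Iio (sInf S)) = ENNReal.ofReal (Function.leftLim (cdf ν) (sInf S)) := by
      conv_lhs => rw [← measure_cdf ν]
      rw [StieltjesFunction.measure_Iio _ (tendsto_cdf_atBot ν), sub_zero]
    rw [measureReal_def, h]
    refine ENNReal.toReal_le_of_le_ofReal hv.1.le (ENNReal.ofReal_le_ofReal ?_)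
    refine le_of_tendsto ((monotone_cdf ν).tendsto_leftLim _) ?_
    filter_upwards [self_mem_nhdsWithin] with t ht using (hlt t ht).le
  · rw [← cdf_eq_real]
    refine ge_of_tendsto (((cdf ν).right_continuous (sInf S)).mono Ioi_subset_Ici_self) ?_
    filter_upwards [self_mem_nhdsWithin] with t ht
    obtain ⟨s, hs, hst⟩ := exists_lt_of_csInf_lt hne ht
    exact le_trans hs (monotone_cdf ν hst.le)

lemma prod_randomizedPIT_lt (ν : Measure ℝ) [IsProbabilityMeasure ν] {v : ℝ}
    (hv : v ∈ Ioo (0 : ℝ) 1) :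
    ν.prod uniformUnit (randomizedPIT ν ⁻¹' Iio v) = ENNReal.ofReal v := by
  obtain ⟨q, hq₁, hq₂, hq₃⟩ := exists_quantile_s4 ν hv
  set c := uniformUnit {w | randomizedPIT ν (q, w) < v} with hc
  have hfiber : (fun t => uniformUnit (Prod.mk t ⁻¹' (randomizedPIT ν ⁻¹' Iio v))) =
      fun t => (Iio q).indicator (fun _ => 1) t + ({q} : Set ℝ).indicator (fun _ => c) t := by
    ext t
    rcases lt_trichotomy t q with h | rfl | h
    · have h1 : uniformUnit (Prod.mk t ⁻¹' (randomizedPIT ν ⁻¹' Iio v)) = 1 := by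
        rw [← measure_univ (μ := uniformUnit)]
        refine measure_congr (eventuallyEq_univ.2 ?_)
        filter_upwards [ae_restrict_mem measurableSet_Icc] with w hw
        exact (randomizedPIT_le ν t hw.2).trans_lt (hq₃ t h)
      simp [h1, h, h.ne]
    · simp only [mem_Iio, lt_irrefl, not_false_eq_true, indicator_of_notMem, mem_singleton_iff,
        indicator_of_mem, zero_add]
      rfl
    · have h0 : uniformUnit (Prod.mk t ⁻¹' (randomizedPIT ν ⁻¹' Iio v)) = 0 := by
        refine measure_eq_zero_iff_ae_notMem.2 ?_
        filter_upwards [ae_restrict_mem measurableSet_Icc] with w hw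
        have h2 : v ≤ ν.real (Iio t) :=
          hq₂.trans (measureReal_mono (Iic_subset_Iio.2 h))
        exact not_lt.2 (h2.trans (le_randomizedPIT ν t hw.1))
      simp [h0, h.le, h.ne']
  have hcq : c * ν {q} = ENNReal.ofReal (v - ν.real (Iio q)) := by
    rw [measureReal_Iic_eq_Iio_add_singleton] at hq₂
    rcases (measureReal_nonneg (μ := ν) (s := {q})).eq_or_lt with h0 | hpos
    · have : v - ν.real (Iio q) = 0 := by linarith
      rw [this, (measureReal_eq_zero_iff).1 h0.symm]
      simp
    · have hset : {w | randomizedPIT ν (q, w) < v} = Iio ((v - ν.real (Iio q)) / ν.real {q}) := by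
        ext w
        simp only [randomizedPIT, mem_ofPred_eq, mem_Iio, lt_div_iff₀ hpos]
        constructor <;> intro h <;> linarith
      have hmem : (v - ν.real (Iio q)) / ν.real {q} ∈ Icc (0 : ℝ) 1 :=
        ⟨div_nonneg (by linarith) hpos.le, (div_le_one hpos).2 (by linarith)⟩
      rw [hc, hset, uniformUnit_Iio hmem, ← ofReal_measureReal (μ := ν) (s := {q}),
        ← ENNReal.ofReal_mul hmem.1, div_mul_cancel₀ _ hpos.ne']
  rw [Measure.prod_apply (measurable_randomizedPIT ν measurableSet_Iio), hfiber,
    lintegral_add_left (measurable_const.indicator measurableSet_Iio),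
    lintegral_indicator_const measurableSet_Iio,
    lintegral_indicator_const (measurableSet_singleton q), hcq, one_mul,
    ← ofReal_measureReal (μ := ν) (s := Iio q),
    ← ENNReal.ofReal_add measureReal_nonneg (by linarith)]
  congr 1
  ring

/-- The randomized probability integral transform is uniformly distributed. -/
lemma map_randomizedPIT (ν : Measure ℝ) [IsProbabilityMeasure ν] :
    (ν.prod uniformUnit).map (randomizedPIT ν) = uniformUnit := by
  have hm := measurable_randomizedPIT ν
  have : IsProbabilityMeasure ((ν.prod uniformUnit).map (randomizedPIT ν)) :=
    Measure.isProbabilityMeasure_map hm.aemeasurable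
  have hmem : ∀ᵐ x ∂(ν.prod uniformUnit).map (randomizedPIT ν), x ∈ Icc (0 : ℝ) 1 := by
    refine (ae_map_iff hm.aemeasurable measurableSet_Icc).2 ?_
    have h : ∀ᵐ p ∂ν.prod uniformUnit, p.2 ∈ Icc (0 : ℝ) 1 :=
      Measure.quasiMeasurePreserving_snd.ae (ae_restrict_mem measurableSet_Icc)
    filter_upwards [h] with p hp using randomizedPIT_mem_Icc ν p.1 hp
  suffices h : ∀ v, (ν.prod uniformUnit).map (randomizedPIT ν) (Iio v) = uniformUnit (Iio v) by
    refine Measure.ext_of_Ici _ _ fun v => ?_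
    rw [← compl_Iio, prob_compl_eq_one_sub measurableSet_Iio,
      prob_compl_eq_one_sub measurableSet_Iio, h]
  have hmid : ∀ v ∈ Ioo (0 : ℝ) 1,
      (ν.prod uniformUnit).map (randomizedPIT ν) (Iio v) = ENNReal.ofReal v := fun v hv => by
    rw [Measure.map_apply hm measurableSet_Iio, prod_randomizedPIT_lt ν hv]
  intro v
  rcases le_or_gt v 0 with h0 | h0
  · have hzero : ∀ ρ : Measure ℝ, (∀ᵐ x ∂ρ, x ∈ Icc (0 : ℝ) 1) → ρ (Iio v) = 0 := fun ρ hρ => by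
      refine measure_eq_zero_iff_ae_notMem.2 ?_
      filter_upwards [hρ] with x hx using not_lt.2 (h0.trans hx.1)
    rw [hzero _ hmem, hzero _ (ae_restrict_mem measurableSet_Icc)]
  rcases lt_or_ge v 1 with h1 | h1
  · rw [hmid v ⟨h0, h1⟩, uniformUnit_Iio ⟨h0.le, h1.le⟩]
  · have hone : ∀ ρ : Measure ℝ, IsProbabilityMeasure ρ →
        (∀ r ∈ Ioo (0 : ℝ) 1, ρ (Iio r) = ENNReal.ofReal r) → ρ (Iio v) = 1 := by
      intro ρ _ hρ
      refine le_antisymm prob_le_one ?_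
      have hlim : Tendsto (fun r : ℝ => ENNReal.ofReal r) (𝓝[<] 1) (𝓝 1) := by
        rw [← ENNReal.ofReal_one]
        exact (ENNReal.continuous_ofReal.tendsto 1).mono_left nhdsWithin_le_nhds
      refine le_of_tendsto hlim ?_
      filter_upwards [Ioo_mem_nhdsLT (zero_lt_one' ℝ)] with r hr
      rw [← hρ r hr]
      exact measure_mono (Iio_subset_Iio (hr.2.le.trans h1))
    rw [hone _ this hmid, hone _ inferInstance fun r hr => uniformUnit_Iio ⟨hr.1.le, hr.2.le⟩]

lemma integral_randomizedPIT (ν : Measure ℝ) (t : ℝ) :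
    ∫ w, randomizedPIT ν (t, w) ∂uniformUnit = ν.real (Iio t) + (1 / 2) * ν.real {t} := by
  have hid : Integrable (fun w : ℝ => w) uniformUnit :=
    continuous_id.integrableOn_Icc
  have hint : ∫ w, w ∂uniformUnit = (1 / 2 : ℝ) := by
    rw [integral_Icc_eq_integral_Ioc, ← intervalIntegral.integral_of_le zero_le_one, integral_id]
    norm_num
  simp only [randomizedPIT]
  rw [integral_add (integrable_const _) (hid.mul_const _), integral_mul_const, hint]
  simp

/-- The mid-distribution transform of a distribution dominates the uniform distribution in the
concave order. -/
lemma integral_le_integral_midDistribution (ν : Measure ℝ) [IsProbabilityMeasure ν] {f : ℝ → ℝ}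
    (hf : ConcaveOn ℝ univ f) :
    ∫ u in (0 : ℝ)..1, f u ≤ ∫ t, f (ν.real (Iio t) + (1 / 2) * ν.real {t}) ∂ν := by
  have hfc : Continuous f := continuousOn_univ.1 (hf.continuousOn isOpen_univ)
  have hm := measurable_randomizedPIT ν
  obtain ⟨C, hC⟩ := isCompact_Icc.exists_bound_of_continuousOn (hfc.continuousOn (s := Icc 0 1))
  have hint : Integrable (fun p => f (randomizedPIT ν p)) (ν.prod uniformUnit) := by
    have h : Integrable f ((ν.prod uniformUnit).map (randomizedPIT ν)) := by
      rw [map_randomizedPIT]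
      exact hfc.integrableOn_Icc
    exact h.comp_measurable hm
  have hmid : ∀ t, ν.real (Iio t) + (1 / 2) * ν.real {t} = randomizedPIT ν (t, 1 / 2) :=
    fun _ => rfl
  calc ∫ u in (0 : ℝ)..1, f u = ∫ u, f u ∂uniformUnit := by
        rw [intervalIntegral.integral_of_le zero_le_one, integral_Icc_eq_integral_Ioc]
    _ = ∫ p, f (randomizedPIT ν p) ∂ν.prod uniformUnit := by
        rw [← integral_map hm.aemeasurable hfc.aestronglyMeasurable, map_randomizedPIT]
    _ = ∫ t, ∫ w, f (randomizedPIT ν (t, w)) ∂uniformUnit ∂ν := integral_prod _ hint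
    _ ≤ ∫ t, f (ν.real (Iio t) + (1 / 2) * ν.real {t}) ∂ν := by
        refine integral_mono hint.integral_prod_left ?_ fun t => ?_
        · refine Integrable.of_bound (C := C) (hfc.measurable.comp
            ((measurable_measureReal_Iio ν).add
              ((measurable_measureReal_singleton ν).const_mul _))).aestronglyMeasurable ?_
          filter_upwards with t
          rw [hmid]
          exact hC _ (randomizedPIT_mem_Icc ν t (by norm_num))
        · have hcont : Continuous fun w => randomizedPIT ν (t, w) := by
            simp only [randomizedPIT]
            fun_prop
          dsimp only
          rw [← integral_randomizedPIT]
          exact hf.le_map_integral hfc.continuousOn isClosed_univ (by simp)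
            hcont.integrableOn_Icc (hfc.comp hcont).integrableOn_Icc

/-- Given `X`, the conditional probability that `(X, Y)` lies in `s`, for `Y` independent of `X`,
is the measure of the section of `s` under the law of `Y`. -/
lemma condExp_indicator_prodMk_of_indepFun {Ω : Type*} [MeasurableSpace Ω] {μ : Measure Ω}
    [IsProbabilityMeasure μ] {X Y : Ω → ℝ} (hX : Measurable X) (hY : Measurable Y)
    (hXY : IndepFun X Y μ) {s : Set (ℝ × ℝ)} (hs : MeasurableSet s) :
    μ[{ω | (X ω, Y ω) ∈ s}.indicator (fun _ => (1 : ℝ)) | MeasurableSpace.comap X inferInstance]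
      =ᵐ[μ] fun ω => (μ.map Y).real (Prod.mk (X ω) ⁻¹' s) := by
  have : IsProbabilityMeasure (μ.map Y) := Measure.isProbabilityMeasure_map hY.aemeasurable
  have hker : condDistrib Y X μ =ᵐ[μ.map X] Kernel.const ℝ (μ.map Y) := by
    refine condDistrib_ae_eq_of_measure_eq_compProd X hY.aemeasurable ?_
    rw [Measure.compProd_const]
    exact (indepFun_iff_map_prod_eq_prod_map_map hX.aemeasurable hY.aemeasurable).1 hXY
  have hcond := condExp_prod_ae_eq_integral_condDistrib (μ := μ) hX hY.aemeasurable
    (f := s.indicator fun _ => (1 : ℝ)) (stronglyMeasurable_const.indicator hs)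
    ((integrable_const (1 : ℝ)).indicator (hX.prodMk hY hs))
  refine EventuallyEq.trans hcond ?_
  filter_upwards [ae_of_ae_map hX.aemeasurable hker] with ω hω
  rw [hω, Kernel.const_apply]
  exact integral_indicator_one (measurable_prodMk_left hs)

/-- **Theorem (frequentist interpretation).** For any random variable `T` and an independent
copy `T'` of `T`, the midway tie-broken exceedance probability
`P̃ = (1/2)·ℙ(T' ≤ T | T) + (1/2)·ℙ(T' < T | T)` is a p*-variable. -/
theorem isPStarVar_half_cdf_average
    {Ω : Type*} [MeasurableSpace Ω] (μ : Measure Ω) [IsProbabilityMeasure μ]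
    (T T' : Ω → ℝ) (hT : Measurable T) (hT' : Measurable T')
    (hid : IdentDistrib T' T μ μ) (hind : IndepFun T' T μ) :
    IsPStarVar μ (fun ω =>
      (1/2) * (μ[Set.indicator {ω' | T' ω' ≤ T ω'} (fun _ => (1:ℝ)) |
          MeasurableSpace.comap T inferInstance]) ω +
      (1/2) * (μ[Set.indicator {ω' | T' ω' < T ω'} (fun _ => (1:ℝ)) |
          MeasurableSpace.comap T inferInstance]) ω) := by
  intro f _ hf _ _
  have hlaw : μ.map T' = μ.map T := hid.map_eq
  have : IsProbabilityMeasure (μ.map T) := Measure.isProbabilityMeasure_map hT.aemeasurable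
  have hle := condExp_indicator_prodMk_of_indepFun hT hT' hind.symm
    (measurableSet_le measurable_snd measurable_fst)
  have hlt := condExp_indicator_prodMk_of_indepFun hT hT' hind.symm
    (measurableSet_lt measurable_snd measurable_fst)
  rw [hlaw] at hle hlt
  have hfc : Continuous f := continuousOn_univ.1 (hf.continuousOn isOpen_univ)
  have hmeas : Measurable fun t => f ((μ.map T).real (Iio t) + (1 / 2) * (μ.map T).real {t}) :=
    hfc.measurable.comp ((measurable_measureReal_Iio _).add
      ((measurable_measureReal_singleton _).const_mul _))
  refine (integral_le_integral_midDistribution (μ.map T) hf).trans_eq ?_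
  rw [integral_map hT.aemeasurable hmeas.aestronglyMeasurable]
  refine integral_congr_ae ?_
  filter_upwards [hle, hlt] with ω h₁ h₂
  congr 1
  refine Eq.trans ?_ (congrArg₂ (fun a b => (1 / 2) * a + (1 / 2) * b) h₁ h₂).symm
  change _ = (1 / 2) * (μ.map T).real (Iic (T ω)) + (1 / 2) * (μ.map T).real (Iio (T ω))
  rw [measureReal_Iic_eq_Iio_add_singleton]
  ring
end

section
/- Let α ∈ (0,1/2] and let V be an α-random threshold, and let V* be a random variable uniformly distributed on [0,2α]. Then E[f(V)] ≥ E[f(V*)] for every convex function f : ℝ → ℝ for which both expectations exist; in particular Var(V) ≥ α²/3, and this smallest variance is attained by V*. -/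
open MeasureTheory ProbabilityTheory

/-- `V` is an `α`-random threshold: a `(0,1)`-valued random variable with mean `α` whose
distribution has a decreasing density on `(0,1)`. -/
def IsAlphaRandomThreshold {Ω : Type*} [MeasurableSpace Ω] (μ : Measure Ω) (α : ℝ)
    (V : Ω → ℝ) : Prop :=
  Measurable V ∧ (∀ ω, V ω ∈ Set.Ioo (0:ℝ) 1) ∧ (∫ ω, V ω ∂μ = α) ∧
  ∃ h : ℝ → ℝ, Measurable h ∧ AntitoneOn h (Set.Ioo 0 1) ∧
    (∀ x ∈ Set.Ioo (0:ℝ) 1, 0 ≤ h x) ∧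
    ∀ s : Set ℝ, MeasurableSet s → s ⊆ Set.Ioo 0 1 →
      μ.map V s = ENNReal.ofReal (∫ x in s, h x)

/-- A convex function on `ℝ` has, for `a ≤ b`, an affine function lying below it outside `(a, b)`
and above it on `(a, b)`: the chord if `a < b`, a supporting line if `a = b`. -/
lemma ConvexOn.exists_affine_crossing {f : ℝ → ℝ} (hf : ConvexOn ℝ Set.univ f) {a b : ℝ}
    (hab : a ≤ b) :
    ∃ p q : ℝ, (∀ x ≤ a, p * x + q ≤ f x) ∧ (∀ x, b ≤ x → p * x + q ≤ f x) ∧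
      ∀ x, a < x → x < b → f x ≤ p * x + q := by
  rcases hab.eq_or_lt with rfl | hlt
  · have hsupp : ∀ x, f a + derivWithin f (Set.Ioi a) a * (x - a) ≤ f x := by
      intro x
      rcases lt_trichotomy x a with hx | rfl | hx
      · have hslope := (hf.slope_le_leftDeriv_of_mem_interior (Set.mem_univ x) (by simp) hx).trans
          (hf.leftDeriv_le_rightDeriv_of_mem_interior (by simp))
        rw [slope_def_field, div_le_iff₀ (sub_pos.2 hx)] at hslope
        linarith
      · simp
      · have hslope := hf.rightDeriv_le_slope_of_mem_interior (by simp) (Set.mem_univ x) hx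
        rw [slope_def_field, le_div_iff₀ (sub_pos.2 hx)] at hslope
        linarith
    refine ⟨derivWithin f (Set.Ioi a) a, f a - derivWithin f (Set.Ioi a) a * a, ?_, ?_, ?_⟩
    · intro x _
      linarith [hsupp x]
    · intro x _
      linarith [hsupp x]
    · intro x h₁ h₂
      exact absurd (h₁.trans h₂) (lt_irrefl _)
  · have hba : 0 < b - a := sub_pos.2 hlt
    have hchord : ∀ x, (f b - f a) / (b - a) * x + (f a - (f b - f a) / (b - a) * a)
        = f a + (f b - f a) / (b - a) * (x - a) := fun x => by ring
    refine ⟨(f b - f a) / (b - a), f a - (f b - f a) / (b - a) * a, ?_, ?_, ?_⟩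
    · intro x hx
      rw [hchord]
      rcases hx.eq_or_lt with rfl | hx
      · simp
      · have hslope := hf.slope_mono_adjacent (Set.mem_univ x) (Set.mem_univ b) hx hlt
        rw [div_le_iff₀ (sub_pos.2 hx)] at hslope
        linarith
    · intro x hx
      rw [hchord]
      have hslope := hf.secant_mono (Set.mem_univ a) (Set.mem_univ b) (Set.mem_univ x) hlt.ne'
        (hlt.trans_le hx).ne' hx
      rw [le_div_iff₀ (by linarith)] at hslope
      linarith
    · intro x hax hxb
      rw [hchord]
      have hslope := hf.secant_mono (Set.mem_univ a) (Set.mem_univ x) (Set.mem_univ b) hax.ne'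
        hlt.ne' hxb.le
      rw [div_le_iff₀ (by linarith)] at hslope
      linarith

/-- An antitone function on `(0, b)` crosses each level `c` at some point of `[0, b]`. -/
lemma AntitoneOn.exists_crossing {h : ℝ → ℝ} {b : ℝ} (hb : 0 ≤ b)
    (hh : AntitoneOn h (Set.Ioo 0 b)) (c : ℝ) :
    ∃ t ∈ Set.Icc 0 b, (∀ x ∈ Set.Ioo 0 b, x < t → c ≤ h x) ∧
      ∀ x ∈ Set.Ioo 0 b, t < x → h x ≤ c := by
  set S : Set ℝ := insert 0 {x ∈ Set.Ioo 0 b | c ≤ h x}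
  have hle : ∀ x ∈ S, x ≤ b := by
    rintro x (rfl | hx)
    · exact hb
    · exact hx.1.2.le
  have hbdd : BddAbove S := ⟨b, hle⟩
  have h0 : (0 : ℝ) ∈ S := Set.mem_insert _ _
  refine ⟨sSup S, ⟨le_csSup hbdd h0, csSup_le ⟨0, h0⟩ hle⟩, ?_, ?_⟩
  · intro x hx hxt
    obtain ⟨y, hy, hxy⟩ := exists_lt_of_lt_csSup ⟨0, h0⟩ hxt
    rcases hy with rfl | hy
    · exact absurd hxy hx.1.le.not_gt
    · exact hy.2.trans (hh hx hy.1 hxy.le)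
  · intro x hx htx
    by_contra! hc
    exact htx.not_ge (le_csSup hbdd (Or.inr ⟨hx, hc.le⟩))

/-- If `h` is a decreasing density on `(0,1)` with the same mass and the same mean as the constant
density `c` on `(0, b)`, then it integrates convex functions to larger values. -/
lemma ConvexOn.integral_const_le_integral_antitone {f h : ℝ → ℝ} {b c : ℝ}
    (hf : ConvexOn ℝ Set.univ f) (hb0 : 0 ≤ b) (hb1 : b ≤ 1)
    (hanti : AntitoneOn h (Set.Ioo 0 1)) (hpos : ∀ x ∈ Set.Ioo (0 : ℝ) 1, 0 ≤ h x)
    (hint : IntegrableOn h (Set.Ioo 0 1))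
    (hmass : ∫ _ in Set.Ioo 0 b, c = ∫ x in Set.Ioo (0 : ℝ) 1, h x)
    (hmean : ∫ x in Set.Ioo 0 b, c * x = ∫ x in Set.Ioo (0 : ℝ) 1, h x * x) :
    ∫ x in Set.Ioo 0 b, c * f x ≤ ∫ x in Set.Ioo (0 : ℝ) 1, h x * f x := by
  have hsub : Set.Ioo 0 b ⊆ Set.Ioo 0 1 := Set.Ioo_subset_Ioo_right hb1
  obtain ⟨t, ht, hlow, hhigh⟩ := (hanti.mono hsub).exists_crossing hb0 c
  obtain ⟨p, q, hleft, hright, hmid⟩ := hf.exists_affine_crossing ht.2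
  have hcont : Continuous f := continuousOn_univ.1 (hf.continuousOn isOpen_univ)
  have hI : ∀ φ : ℝ → ℝ, Continuous φ → IntegrableOn (fun x => h x * φ x) (Set.Ioo 0 1) := by
    intro φ hφ
    rw [← integrableOn_Icc_iff_integrableOn_Ioo] at hint ⊢
    exact hint.mul_continuousOn hφ.continuousOn isCompact_Icc
  have hJ : ∀ φ : ℝ → ℝ, Continuous φ → IntegrableOn (fun x => c * φ x) (Set.Ioo 0 b) := by
    intro φ hφ
    rw [← integrableOn_Icc_iff_integrableOn_Ioo]
    exact (continuous_const.mul hφ).continuousOn.integrableOn_Icc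
  have hline : Continuous fun x : ℝ => p * x + q := by fun_prop
  have haff : ∫ x in Set.Ioo 0 b, c * (p * x + q)
      = ∫ x in Set.Ioo (0 : ℝ) 1, h x * (p * x + q) := by
    have e₁ : ∀ x, c * (p * x + q) = p * (c * x) + q * c := fun x => by ring
    have e₂ : ∀ x, h x * (p * x + q) = p * (h x * x) + q * h x := fun x => by ring
    simp only [e₁, e₂]
    have hJid : IntegrableOn (fun x => c * x) (Set.Ioo 0 b) := hJ _ continuous_id
    have hIid : IntegrableOn (fun x => h x * x) (Set.Ioo 0 1) := hI _ continuous_id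
    have hJconst : IntegrableOn (fun _ => c) (Set.Ioo 0 b) := by simp
    rw [integral_add (hJid.const_mul p) (hJconst.const_mul q),
      integral_add (hIid.const_mul p) (hint.const_mul q),
      integral_const_mul p, hmean, integral_const_mul q, hmass, integral_const_mul p,
      integral_const_mul q]
  have hkey : ∫ x in Set.Ioo 0 b, c * (f x - (p * x + q))
      ≤ ∫ x in Set.Ioo (0 : ℝ) 1, h x * (f x - (p * x + q)) := by
    have hind : ∫ x in Set.Ioo 0 b, c * (f x - (p * x + q)) = ∫ x in Set.Ioo (0 : ℝ) 1,
        (Set.Ioo 0 b).indicator (fun x => c * (f x - (p * x + q))) x := by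
      rw [setIntegral_indicator measurableSet_Ioo, Set.inter_eq_right.2 hsub]
    rw [hind]
    refine setIntegral_mono_on_ae
      ((integrable_indicator_iff measurableSet_Ioo).2 (hJ _ (hcont.sub hline))).integrableOn
      (hI _ (hcont.sub hline)) measurableSet_Ioo ?_
    filter_upwards [Measure.ae_ne volume t] with x hxt hx
    by_cases hxb : x ∈ Set.Ioo 0 b
    · rw [Set.indicator_of_mem hxb]
      rcases lt_or_gt_of_ne hxt with hlt | hgt
      · exact mul_le_mul_of_nonneg_right (hlow x hxb hlt) (sub_nonneg.2 (hleft x hlt.le))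
      · exact mul_le_mul_of_nonpos_right (hhigh x hxb hgt) (sub_nonpos.2 (hmid x hgt hxb.2))
    · rw [Set.indicator_of_notMem hxb]
      have hbx : b ≤ x := not_lt.1 fun hlt => hxb ⟨hx.1, hlt⟩
      exact mul_nonneg (hpos x hx) (sub_nonneg.2 (hright x hbx))
  simp only [mul_sub] at hkey
  rw [integral_sub (hJ f hcont) (hJ _ hline), integral_sub (hI f hcont) (hI _ hline), haff] at hkey
  linarith

/-- A law on `(0,1)` whose values are integrals of `h ≥ 0` is the measure with density `h`. -/
lemma map_eq_withDensity_of_forall_eq_setIntegral {Ω : Type*} [MeasurableSpace Ω] {μ : Measure Ω}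
    {V : Ω → ℝ} {h : ℝ → ℝ} (hVm : Measurable V) (hV01 : ∀ ω, V ω ∈ Set.Ioo (0 : ℝ) 1)
    (hint : IntegrableOn h (Set.Ioo 0 1)) (hpos : ∀ x ∈ Set.Ioo (0 : ℝ) 1, 0 ≤ h x)
    (hlaw : ∀ s : Set ℝ, MeasurableSet s → s ⊆ Set.Ioo 0 1 →
      μ.map V s = ENNReal.ofReal (∫ x in s, h x)) :
    μ.map V = (volume.restrict (Set.Ioo (0 : ℝ) 1)).withDensity fun x => ENNReal.ofReal (h x) := by
  ext s hs
  have hcap : μ.map V s = μ.map V (s ∩ Set.Ioo 0 1) := by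
    rw [Measure.map_apply hVm hs, Measure.map_apply hVm (hs.inter measurableSet_Ioo)]
    congr 1
    ext ω
    simp [(hV01 ω).1, (hV01 ω).2]
  rw [hcap, hlaw _ (hs.inter measurableSet_Ioo) Set.inter_subset_right, withDensity_apply _ hs,
    Measure.restrict_restrict hs,
    ofReal_integral_eq_lintegral_ofReal (hint.mono_set Set.inter_subset_right)]
  exact ae_restrict_of_forall_mem (hs.inter measurableSet_Ioo) fun x hx => hpos x hx.2

lemma integral_comp_of_map_eq_withDensity {Ω : Type*} [MeasurableSpace Ω] {μ : Measure Ω}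
    {V : Ω → ℝ} {h φ : ℝ → ℝ} {s : Set ℝ} (hVm : Measurable V) (hs : MeasurableSet s)
    (hhm : Measurable h) (hpos : ∀ x ∈ s, 0 ≤ h x)
    (hlaw : μ.map V = (volume.restrict s).withDensity fun x => ENNReal.ofReal (h x))
    (hφ : Measurable φ) :
    ∫ ω, φ (V ω) ∂μ = ∫ x in s, h x * φ x := by
  rw [← integral_map hVm.aemeasurable hφ.aestronglyMeasurable, hlaw,
    integral_withDensity_eq_integral_toReal_smul hhm.ennreal_ofReal (by simp)]
  refine setIntegral_congr_fun hs fun x hx => ?_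
  simp [ENNReal.toReal_ofReal (hpos x hx)]

lemma integral_comp_of_map_eq_uniform {Ω : Type*} [MeasurableSpace Ω] {μ : Measure Ω}
    {W : Ω → ℝ} {φ : ℝ → ℝ} {b : ℝ} (hb : 0 ≤ b) (hW : Measurable W)
    (hlaw : μ.map W = (ENNReal.ofReal b)⁻¹ • volume.restrict (Set.Icc (0 : ℝ) b))
    (hφ : Measurable φ) :
    ∫ ω, φ (W ω) ∂μ = ∫ x in Set.Ioo 0 b, b⁻¹ * φ x := by
  rw [← integral_map hW.aemeasurable hφ.aestronglyMeasurable, hlaw, integral_smul_measure,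
    integral_const_mul, integral_Icc_eq_integral_Ioo, ENNReal.toReal_inv, ENNReal.toReal_ofReal hb,
    smul_eq_mul]

lemma setIntegral_Ioo_inv_mul_pow {b : ℝ} (hb : 0 < b) (n : ℕ) :
    ∫ x in Set.Ioo 0 b, b⁻¹ * x ^ n = b ^ n / (n + 1) := by
  rw [integral_const_mul, ← integral_Ioc_eq_integral_Ioo,
    ← intervalIntegral.integral_of_le hb.le, integral_pow]
  field_simp
  ring

/-- **Proposition.** Among all `α`-random thresholds, the uniform distribution on `[0,2α]`
minimizes every convex expectation (i.e. it is smallest in convex order), and in particular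
minimizes the variance, the smallest variance being `α²/3`. -/
theorem uniform_minimizes_convex_order_among_thresholds
    {Ω Ω' : Type*} [MeasurableSpace Ω] [MeasurableSpace Ω']
    (μ : Measure Ω) [IsProbabilityMeasure μ] (μ' : Measure Ω') [IsProbabilityMeasure μ']
    (α : ℝ) (hα : α ∈ Set.Ioc (0:ℝ) (1/2))
    (V : Ω → ℝ) (hV : IsAlphaRandomThreshold μ α V)
    (W : Ω' → ℝ) (hW : Measurable W)
    (hWunif : μ'.map W =
      (ENNReal.ofReal (2*α))⁻¹ • volume.restrict (Set.Icc (0:ℝ) (2*α))) :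
    (∀ f : ℝ → ℝ, ConvexOn ℝ Set.univ f →
      Integrable (fun ω => f (V ω)) μ → Integrable (fun ω => f (W ω)) μ' →
      ∫ ω, f (W ω) ∂μ' ≤ ∫ ω, f (V ω) ∂μ) ∧
    α ^ 2 / 3 ≤ variance V μ ∧ variance W μ' = α ^ 2 / 3 := by
  obtain ⟨hVm, hV01, hVmean, h, hhm, hanti, hpos, hlaw⟩ := hV
  have hb : 0 < 2 * α := by linarith [hα.1]
  have hb1 : 2 * α ≤ 1 := by linarith [hα.2]
  have hmass : ∫ x in Set.Ioo (0 : ℝ) 1, h x = 1 := by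
    have hone := hlaw _ measurableSet_Ioo subset_rfl
    rw [Measure.map_apply hVm measurableSet_Ioo,
      show V ⁻¹' Set.Ioo 0 1 = Set.univ from Set.eq_univ_of_forall hV01, measure_univ] at hone
    exact ENNReal.ofReal_eq_one.1 hone.symm
  have hint : IntegrableOn h (Set.Ioo 0 1) := by
    by_contra hnot
    rw [integral_undef hnot] at hmass
    exact zero_ne_one hmass
  have hdens := map_eq_withDensity_of_forall_eq_setIntegral hVm hV01 hint hpos hlaw
  have hEV : ∀ φ : ℝ → ℝ, Measurable φ → ∫ ω, φ (V ω) ∂μ = ∫ x in Set.Ioo 0 1, h x * φ x :=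
    fun φ => integral_comp_of_map_eq_withDensity hVm measurableSet_Ioo hhm hpos hdens
  have hEW : ∀ φ : ℝ → ℝ, Measurable φ →
      ∫ ω, φ (W ω) ∂μ' = ∫ x in Set.Ioo 0 (2 * α), (2 * α)⁻¹ * φ x :=
    fun φ => integral_comp_of_map_eq_uniform hb.le hW hWunif
  have hconv : ∀ f : ℝ → ℝ, ConvexOn ℝ Set.univ f →
      ∫ ω, f (W ω) ∂μ' ≤ ∫ ω, f (V ω) ∂μ := by
    intro f hf
    have hfm : Measurable f := (continuousOn_univ.1 (hf.continuousOn isOpen_univ)).measurable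
    rw [hEV f hfm, hEW f hfm]
    refine hf.integral_const_le_integral_antitone hb.le hb1 hanti hpos hint ?_ ?_
    · simpa [hmass] using setIntegral_Ioo_inv_mul_pow hb 0
    · have hmeanV := hEV id measurable_id
      have hmeanW := setIntegral_Ioo_inv_mul_pow hb 1
      simp only [id, hVmean] at hmeanV
      simp only [pow_one] at hmeanW
      rw [← hmeanV, hmeanW]
      norm_num
  have hWmean : ∫ ω, W ω ∂μ' = α := by
    have hmeanW := setIntegral_Ioo_inv_mul_pow hb 1
    have := hEW id measurable_id
    simp only [id, pow_one] at this hmeanW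
    rw [this, hmeanW]
    norm_num
  have hWsq : ∫ ω, W ω ^ 2 ∂μ' = 4 * α ^ 2 / 3 := by
    rw [hEW (fun x => x ^ 2) (by fun_prop), setIntegral_Ioo_inv_mul_pow hb 2]
    push_cast
    ring
  have hWmem : ∀ᵐ ω ∂μ', W ω ∈ Set.Icc 0 (2 * α) := by
    refine ae_of_ae_map hW.aemeasurable ?_
    rw [hWunif]
    exact Measure.ae_smul_measure (ae_restrict_mem measurableSet_Icc) _
  have hVL : MemLp V 2 μ :=
    memLp_of_bounded (.of_forall fun ω => Set.Ioo_subset_Icc_self (hV01 ω))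
      hVm.aestronglyMeasurable 2
  have hWL : MemLp W 2 μ' := memLp_of_bounded hWmem hW.aestronglyMeasurable 2
  refine ⟨fun f hf _ _ => hconv f hf, ?_, ?_⟩
  · have hsq := hconv (fun x => x ^ 2) (even_two.convexOn_pow)
    rw [variance_eq_sub hVL]
    simp only [Pi.pow_apply, hVmean]
    linarith
  · rw [variance_eq_sub hWL]
    simp only [Pi.pow_apply, hWmean, hWsq]
    ring
end

section
/- For every e-variable E, the random variable P := min(1/(2E), 1) is a p*-variable (with the convention 1/(2E) = ∞ when E = 0). -/
open MeasureTheory ProbabilityTheory ENNReal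

/-- A concave function on the real line lies below a supporting line at each point. -/
lemma ConcaveOn.exists_supporting_line {f : ℝ → ℝ} (hf : ConcaveOn ℝ Set.univ f) (x : ℝ) :
    ∃ s : ℝ, ∀ y, f y ≤ f x + s * (y - x) := by
  have hx : x ∈ interior (Set.univ : Set ℝ) := by simp
  have hg : ConvexOn ℝ Set.univ (-f) := hf.neg
  refine ⟨-derivWithin (-f) (Set.Ioi x) x, fun y => ?_⟩
  rcases lt_trichotomy x y with h | rfl | h
  · have key := hg.rightDeriv_le_slope_of_mem_interior hx (Set.mem_univ y) h
    rw [slope_def_field, le_div_iff₀ (sub_pos.2 h)] at key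
    simp only [Pi.neg_apply] at key
    linarith
  · simp
  · have key := (hg.slope_le_leftDeriv_of_mem_interior (Set.mem_univ y) hx h).trans
      (hg.leftDeriv_le_rightDeriv_of_mem_interior hx)
    rw [slope_def_field, div_le_iff₀ (sub_pos.2 h)] at key
    simp only [Pi.neg_apply] at key
    linarith

/-- The mean over `[0, 1]` of an increasing function is at most its value at `1`. -/
lemma Monotone.integral_zero_one_le {f : ℝ → ℝ} (hf : Monotone f) :
    ∫ u in (0:ℝ)..1, f u ≤ f 1 := by
  have h := intervalIntegral.integral_mono_on (μ := volume) (zero_le_one' ℝ)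
    hf.intervalIntegrable (intervalIntegrable_const (c := f 1)) (fun u hu => hf hu.2)
  simpa using h

/-- The mean over `[0, 1]` of an increasing concave `f` is at most
`f 1 - 2 p (f 1 - f p)`, for every `p ∈ [0, 1]`. -/
lemma Monotone.integral_zero_one_le_of_concaveOn {f : ℝ → ℝ} (hf : Monotone f)
    (hc : ConcaveOn ℝ Set.univ f) {p : ℝ} (hp0 : 0 ≤ p) (hp1 : p ≤ 1) :
    ∫ u in (0:ℝ)..1, f u ≤ f 1 - 2 * p * (f 1 - f p) := by
  obtain ⟨s, hs⟩ := hc.exists_supporting_line p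
  have hs0 : 0 ≤ s := by
    have h1 := hs (p + 1)
    have h2 : f p ≤ f (p + 1) := hf (by linarith)
    linarith
  have hg0 : 0 ≤ f 1 - f p := sub_nonneg.2 (hf hp1)
  have h1 := hs 1
  rcases hs0.eq_or_lt with rfl | hs0
  · have hfp : f 1 - f p = 0 := by linarith
    simpa [hfp] using hf.integral_zero_one_le
  -- The supporting line at `p` reaches the level `f 1` at the point `a`.
  obtain ⟨a, ha⟩ : ∃ a, f 1 - f p = s * (a - p) :=
    ⟨p + (f 1 - f p) / s, by field_simp; ring⟩
  have hpa : p ≤ a := by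
    by_contra! h
    nlinarith
  have ha1 : a ≤ 1 := by
    by_contra! h
    nlinarith
  have hleft : ∫ u in (0:ℝ)..a, f u ≤ ∫ u in (0:ℝ)..a, (f p - s * p + s * u) :=
    intervalIntegral.integral_mono_on (hp0.trans hpa) hf.intervalIntegrable
      (Continuous.intervalIntegrable (by fun_prop) _ _)
      (fun u _ => (hs u).trans_eq (by ring))
  have hline : ∫ u in (0:ℝ)..a, (f p - s * p + s * u) = a * (f p - s * p) + s * (a ^ 2 / 2) := by
    rw [intervalIntegral.integral_add (by simp)
      (Continuous.intervalIntegrable (by fun_prop) _ _), intervalIntegral.integral_const_mul, integral_id,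
      intervalIntegral.integral_const, smul_eq_mul]
    ring
  have hright : ∫ u in a..1, f u ≤ (1 - a) * f 1 := by
    have h := intervalIntegral.integral_mono_on (μ := volume) ha1
      hf.intervalIntegrable (intervalIntegrable_const (c := f 1)) (fun u hu => hf hu.2)
    simpa using h
  rw [← intervalIntegral.integral_add_adjacent_intervals
    (hf.intervalIntegrable (a := 0) (b := a)) (hf.intervalIntegrable (a := a) (b := 1))]
  have hf1 : f 1 = f p + s * (a - p) := by linarith
  rw [hf1] at hright ⊢
  nlinarith [mul_nonneg hs0.le (sq_nonneg (a - 2 * p))]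

/-- The calibrated value `min (1 / (2 e)) 1` satisfies a bound on `f` that is affine in `e`. -/
lemma Monotone.sub_mul_le_apply_min_inv {f : ℝ → ℝ} (hf : Monotone f)
    (hc : ConcaveOn ℝ Set.univ f) {e : ℝ≥0∞} (he : e ≠ ∞) :
    f 1 - e.toReal * (f 1 - ∫ u in (0:ℝ)..1, f u) ≤ f (min (2 * e)⁻¹ 1).toReal := by
  have hF := hf.integral_zero_one_le
  rcases le_total 1 (2 * e)⁻¹ with h | h
  · rw [min_eq_right h, ENNReal.toReal_one]
    have := mul_nonneg (ENNReal.toReal_nonneg (a := e)) (sub_nonneg.2 hF)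
    linarith
  · rw [min_eq_left h]
    have he0 : e ≠ 0 := by
      rintro rfl
      simp at h
    have hpos : 0 < e.toReal := ENNReal.toReal_pos he0 he
    have hp1 : ((2 * e)⁻¹).toReal ≤ 1 :=
      ENNReal.toReal_le_of_le_ofReal zero_le_one (by simpa using h)
    have key := hf.integral_zero_one_le_of_concaveOn hc ENNReal.toReal_nonneg hp1
    have hp : e.toReal * (2 * ((2 * e)⁻¹).toReal) = 1 := by
      rw [ENNReal.toReal_inv, ENNReal.toReal_mul, ENNReal.toReal_ofNat]
      field_simp
    have h2 := mul_le_mul_of_nonneg_left key hpos.le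
    linear_combination h2 - (f 1 - f ((2 * e)⁻¹).toReal) * hp

/-- **Theorem (e-to-p* calibration).** For every e-variable `E` (a nonnegative random
variable, possibly `∞`, with `E[E] ≤ 1`), the random variable `P = min (1/(2E)) 1` is a
p*-variable (with the convention `1/(2E) = ∞` when `E = 0`). -/
theorem min_inv_two_e_is_pStarVar
    {Ω : Type*} [MeasurableSpace Ω] (μ : Measure Ω) [IsProbabilityMeasure μ]
    (E : Ω → ℝ≥0∞) (hE : Measurable E) (hE1 : ∫⁻ ω, E ω ∂μ ≤ 1) :
    IsPStarVar μ (fun ω => (min (2 * E ω)⁻¹ 1).toReal) := by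
  intro f hf hc _ hfP
  have hne : ∫⁻ ω, E ω ∂μ ≠ ∞ := (hE1.trans_lt ENNReal.one_lt_top).ne
  have hEint : Integrable (fun ω => (E ω).toReal) μ :=
    integrable_toReal_of_lintegral_ne_top hE.aemeasurable hne
  have hmean : ∫ ω, (E ω).toReal ∂μ ≤ 1 := by
    rw [integral_toReal hE.aemeasurable (ae_lt_top hE hne)]
    exact ENNReal.toReal_le_of_le_ofReal zero_le_one (by simpa using hE1)
  have hF := hf.integral_zero_one_le
  calc ∫ u in (0:ℝ)..1, f u
      ≤ f 1 - (∫ ω, (E ω).toReal ∂μ) * (f 1 - ∫ u in (0:ℝ)..1, f u) := by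
        nlinarith [mul_nonneg (sub_nonneg.2 hmean) (sub_nonneg.2 hF)]
    _ = ∫ ω, (f 1 - (E ω).toReal * (f 1 - ∫ u in (0:ℝ)..1, f u)) ∂μ := by
        rw [integral_sub (integrable_const _) (hEint.mul_const _), integral_mul_const]
        simp
    _ ≤ ∫ ω, f (min (2 * E ω)⁻¹ 1).toReal ∂μ := by
        refine integral_mono_ae ((integrable_const _).sub (hEint.mul_const _)) hfP ?_
        filter_upwards [ae_lt_top hE hne] with ω hω
        exact hf.sub_mul_le_apply_min_inv hc hω.ne
end

section
/- Let g : [0,∞] → [0,1] be any e-to-p* calibrator, i.e., a decreasing function such that g(E) is a p*-variable for every e-variable E. Then for every e ∈ [0,∞] with g(e) < 1/2, one has g(e) ≥ 1/(2e). Hence the e-to-p* calibrator e ↦ min(1/(2e), 1) essentially dominates all other e-to-p* calibrators. -/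
open MeasureTheory ProbabilityTheory ENNReal

/-- The expectation of `min U q` for `U` uniform on `[0,1]` and `q ∈ [0,1]`. -/
lemma integral_min_const {q : ℝ} (hq0 : 0 ≤ q) (hq1 : q ≤ 1) :
    ∫ u in (0:ℝ)..1, min u q = q - q ^ 2 / 2 := by
  have hc : Continuous fun u : ℝ => min u q := by fun_prop
  rw [← intervalIntegral.integral_add_adjacent_intervals
    (hc.intervalIntegrable 0 q) (hc.intervalIntegrable q 1)]
  have h₁ : ∫ u in (0:ℝ)..q, min u q = ∫ u in (0:ℝ)..q, u := by
    refine intervalIntegral.integral_congr fun u hu => ?_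
    rw [Set.uIcc_of_le hq0] at hu
    exact min_eq_left hu.2
  have h₂ : ∫ u in q..1, min u q = ∫ _ in q..1, q := by
    refine intervalIntegral.integral_congr fun u hu => ?_
    rw [Set.uIcc_of_le hq1] at hu
    exact min_eq_right hu.1
  rw [h₁, h₂, integral_id, intervalIntegral.integral_const, smul_eq_mul]
  ring

/-- A space carrying every distribution on `[0,∞]` has an event of each probability. -/
lemma exists_measurableSet_measure_eq {Ω : Type*} [MeasurableSpace Ω] {μ : Measure Ω}
    (hrich : ∀ ν : Measure ℝ≥0∞, IsProbabilityMeasure ν →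
      ∃ E : Ω → ℝ≥0∞, Measurable E ∧ μ.map E = ν)
    {q : ℝ≥0∞} (hq : q ≤ 1) : ∃ A : Set Ω, MeasurableSet A ∧ μ A = q := by
  obtain ⟨E, hE, hmap⟩ := hrich (q • Measure.dirac 1 + (1 - q) • Measure.dirac 0)
    ⟨by simp [add_tsub_cancel_of_le hq]⟩
  refine ⟨E ⁻¹' {1}, hE (measurableSet_singleton 1), ?_⟩
  rw [← Measure.map_apply hE (measurableSet_singleton 1), hmap]
  simp

/-- If the random variable equal to `p` on an event of probability `q > 0` and to `r` elsewhere is a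
p*-variable, then `q ≤ 2 * p`. -/
lemma IsPStarVar.measureReal_le_two_mul {Ω : Type*} [MeasurableSpace Ω] {μ : Measure Ω}
    [IsProbabilityMeasure μ] {A : Set Ω} [DecidablePred (· ∈ A)] (hA : MeasurableSet A)
    (hpos : 0 < μ.real A) {p r : ℝ} (h : IsPStarVar μ (fun ω => if ω ∈ A then p else r)) :
    μ.real A ≤ 2 * p := by
  set q := μ.real A with hq
  have hq0 : 0 ≤ q := hpos.le
  have hq1 : q ≤ 1 := measureReal_le_one
  have hf : (fun ω => min (if ω ∈ A then p else r) q) =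
      fun ω => min r q + A.indicator (fun _ => min p q - min r q) ω := by
    funext ω
    by_cases hω : ω ∈ A <;> simp [hω]
  have hind : Integrable (A.indicator fun _ => min p q - min r q) μ :=
    (integrable_const _).indicator hA
  have hint : Integrable (fun ω => min (if ω ∈ A then p else r) q) μ := by
    rw [hf]
    exact (integrable_const _).add hind
  have key := h (fun x => min x q) (fun x y hxy => min_le_min_right q hxy)
    ((concaveOn_id convex_univ).inf (concaveOn_const q convex_univ))
    (Continuous.intervalIntegrable (by fun_prop) 0 1) hint
  rw [integral_min_const hq0 hq1, hf, integral_add (integrable_const _) hind,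
    integral_indicator_const _ hA, ← hq] at key
  simp only [integral_const, probReal_univ, smul_eq_mul, one_mul] at key
  have hp : q * min p q ≤ q * p := mul_le_mul_of_nonneg_left (min_le_left p q) hq0
  have hr : (1 - q) * min r q ≤ (1 - q) * q :=
    mul_le_mul_of_nonneg_left (min_le_right r q) (by linarith)
  nlinarith

/-- **Theorem.** On a probability space rich enough to support an e-variable with any
prescribed distribution, every e-to-p* calibrator `g` (a decreasing `[0,1]`-valued function
on `[0,∞]` such that `g ∘ E` is a p*-variable for every e-variable `E`) satisfies
`g e ≥ 1/(2e)` whenever `g e < 1/2`.  Hence the e-to-p* calibrator `e ↦ min (1/(2e)) 1`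
essentially dominates all other e-to-p* calibrators. -/
theorem e_to_pStar_calibrator_essential_domination
    {Ω : Type*} [MeasurableSpace Ω] (μ : Measure Ω) [IsProbabilityMeasure μ]
    (hrich : ∀ ν : Measure ℝ≥0∞, IsProbabilityMeasure ν →
      ∃ E : Ω → ℝ≥0∞, Measurable E ∧ μ.map E = ν)
    (g : ℝ≥0∞ → ℝ) (hg : Antitone g) (hg01 : ∀ e, g e ∈ Set.Icc (0:ℝ) 1)
    (hcal : ∀ E : Ω → ℝ≥0∞, Measurable E → ∫⁻ ω, E ω ∂μ ≤ 1 →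
      IsPStarVar μ (fun ω => g (E ω))) :
    ∀ e : ℝ≥0∞, g e < 1/2 → (2 * e)⁻¹ ≤ ENNReal.ofReal (g e) := by
  classical
  intro e he
  rcases eq_or_ne e ⊤ with rfl | htop
  · simp
  lift e to NNReal using htop
  set m : NNReal := max 1 e
  have hm1 : 1 ≤ m := le_max_left 1 e
  have hm0 : 0 < m := one_pos.trans_le hm1
  obtain ⟨A, hA, hμA⟩ := exists_measurableSet_measure_eq hrich
    (q := ((m⁻¹ : NNReal) : ℝ≥0∞)) (by exact_mod_cast inv_le_one_of_one_le₀ hm1)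
  have hreal : μ.real A = (m : ℝ)⁻¹ := by simp [Measure.real, hμA]
  have hE : ∫⁻ ω, A.indicator (fun _ => (e : ℝ≥0∞)) ω ∂μ ≤ 1 := by
    rw [lintegral_indicator_const hA, hμA]
    norm_cast
    rw [← div_eq_mul_inv]
    exact div_le_one_of_le₀ (le_max_right 1 e) hm0.le
  have hP := hcal _ (measurable_const.indicator hA) hE
  have hfun : (fun ω => g (A.indicator (fun _ => (e : ℝ≥0∞)) ω)) =
      fun ω => if ω ∈ A then g e else g 0 := by
    funext ω
    by_cases hω : ω ∈ A <;> simp [hω]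
  rw [hfun] at hP
  have hmR : (0 : ℝ) < m := by exact_mod_cast hm0
  have hle := hP.measureReal_le_two_mul hA (by rw [hreal]; positivity)
  rw [hreal, inv_le_iff_one_le_mul₀ hmR] at hle
  have hme : m = e := by
    refine max_eq_right (le_of_not_ge fun h => ?_)
    have : m = 1 := max_eq_left h
    rw [this, NNReal.coe_one] at hle
    linarith
  rw [hme] at hle
  rw [ENNReal.inv_le_iff_le_mul (fun h => absurd h ofReal_ne_top)
    (fun h => absurd h (mul_ne_top ofNat_ne_top coe_ne_top)), ← ofReal_coe_nnreal (p := e),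
    ← ofReal_ofNat 2, ← ofReal_mul zero_le_two, ← ofReal_mul (by positivity), one_le_ofReal,
    ofReal_coe_nnreal]
  linarith
end

section
/- Let E be an e-variable such that E ≤₁ E' (E is first-order stochastically smaller than E') for some e-variable E' whose distribution has a decreasing density function on (0,∞). Then P := min(1/(2E), 1) is a p-variable: ℙ(P ≤ α) ≤ α for all α ∈ (0,1), equivalently ℙ(2E ≥ 1/α) ≤ α for all α ∈ (0,1). -/
open MeasureTheory ProbabilityTheory

/-- A Markov-type bound with improved constant for a decreasing density on `(0, ∞)`. -/
lemma two_mul_setIntegral_Ici_le_of_antitoneOn {h : ℝ → ℝ} (hmono : AntitoneOn h (Set.Ioi 0))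
    (hh0 : ∀ x ∈ Set.Ioi (0:ℝ), 0 ≤ h x) (hint : IntegrableOn h (Set.Ioi 0))
    (hxint : IntegrableOn (fun x => x * h x) (Set.Ioi 0)) {t : ℝ} (ht : 0 < t) :
    2 * t * ∫ x in Set.Ici t, h x ≤ ∫ x in Set.Ioi 0, x * h x := by
  have hsub : Set.Ici t ⊆ Set.Ioi 0 := fun x hx => ht.trans_le hx
  have hsub₁ : Set.Ioc 0 (2 * t) ⊆ Set.Ioi 0 := fun x hx => hx.1
  have hsub₂ : Set.Icc t (2 * t) ⊆ Set.Ioi 0 := fun x hx => ht.trans_le hx.1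
  have hIci : ∫ x in Set.Ici t, h x = ∫ x in Set.Ioi 0, (Set.Ici t).indicator h x := by
    rw [setIntegral_indicator measurableSet_Ici, Set.inter_eq_right.mpr hsub]
  have hid : ∫ x in Set.Ioi 0, (Set.Ioc 0 (2 * t)).indicator (fun x : ℝ => x) x = 2 * t ^ 2 := by
    rw [setIntegral_indicator measurableSet_Ioc, Set.inter_eq_right.mpr hsub₁,
      ← intervalIntegral.integral_of_le (by positivity), integral_id]
    ring
  have hone : ∫ x in Set.Ioi 0, (Set.Icc t (2 * t)).indicator (fun _ : ℝ => (1 : ℝ)) x = t := by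
    rw [setIntegral_indicator measurableSet_Icc, Set.inter_eq_right.mpr hsub₂]
    simp only [setIntegral_const, measureReal_def, Real.volume_Icc, smul_eq_mul, mul_one]
    rw [ENNReal.toReal_ofReal (by linarith)]
    ring
  have iIci : IntegrableOn ((Set.Ici t).indicator h) (Set.Ioi 0) :=
    hint.indicator measurableSet_Ici
  have iid : IntegrableOn ((Set.Ioc 0 (2 * t)).indicator (fun x : ℝ => x)) (Set.Ioi 0) := by
    refine Integrable.integrableOn ?_
    rw [integrable_indicator_iff measurableSet_Ioc]
    exact (continuous_id.integrableOn_Icc).mono_set Set.Ioc_subset_Icc_self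
  have ione : IntegrableOn ((Set.Icc t (2 * t)).indicator (fun _ : ℝ => (1 : ℝ))) (Set.Ioi 0) := by
    refine Integrable.integrableOn ?_
    rw [integrable_indicator_iff measurableSet_Icc]
    exact continuous_const.integrableOn_Icc
  have key : ∫ x in Set.Ioi 0, h t * ((Set.Ioc 0 (2 * t)).indicator (fun x : ℝ => x) x
        - 2 * t * (Set.Icc t (2 * t)).indicator (fun _ : ℝ => (1 : ℝ)) x)
      ≤ ∫ x in Set.Ioi 0, (x * h x - 2 * t * (Set.Ici t).indicator h x) := by
    refine setIntegral_mono_on ((iid.sub (ione.const_mul _)).const_mul _)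
      (hxint.sub (iIci.const_mul _)) measurableSet_Ioi fun x hx => ?_
    have hx0 : 0 < x := hx
    have hhx := hh0 x hx
    simp only [Set.indicator_apply, Set.mem_Ioc, Set.mem_Icc, Set.mem_Ici, hx0, true_and]
    rcases lt_or_ge x t with hxt | hxt
    · have := hmono hx (Set.mem_Ioi.2 ht) hxt.le
      simp only [hxt.not_ge, false_and, if_false, if_pos (show x ≤ 2 * t by linarith)]
      nlinarith
    · have := hmono (Set.mem_Ioi.2 ht) hx hxt
      by_cases hx2 : x ≤ 2 * t
      · simp only [hxt, hx2, and_self, if_true]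
        nlinarith
      · simp only [hxt, hx2, and_false, if_true, if_false]
        nlinarith
  rw [integral_const_mul, integral_sub iid (ione.const_mul _), integral_const_mul, hid, hone,
    integral_sub hxint (iIci.const_mul _), integral_const_mul, ← hIci] at key
  linarith

/-- If a nonnegative integrable random variable `X` has a decreasing density on `(0, ∞)`, then
`2 * t * ℙ(t ≤ X) ≤ 𝔼[X]`. -/
lemma two_mul_measureReal_le_integral_of_antitoneOn_density {Ω : Type*} [MeasurableSpace Ω]
    {μ : Measure Ω} [IsProbabilityMeasure μ] {X : Ω → ℝ} (hXm : Measurable X)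
    (hX0 : ∀ᵐ ω ∂μ, 0 ≤ X ω) (hXint : Integrable X μ)
    {h : ℝ → ℝ} (hhm : Measurable h) (hmono : AntitoneOn h (Set.Ioi 0))
    (hh0 : ∀ x ∈ Set.Ioi (0:ℝ), 0 ≤ h x)
    (hdens : ∀ s : Set ℝ, MeasurableSet s → s ⊆ Set.Ioi 0 →
      μ.map X s = ENNReal.ofReal (∫ x in s, h x)) {t : ℝ} (ht : 0 < t) :
    2 * t * (μ.map X).real (Set.Ici t) ≤ ∫ ω, X ω ∂μ := by
  have hsub : Set.Ici t ⊆ Set.Ioi 0 := fun x hx => ht.trans_le hx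
  by_cases hint : IntegrableOn h (Set.Ioi 0)
  · have hrestrict : (μ.map X).restrict (Set.Ioi 0)
        = (volume.restrict (Set.Ioi 0)).withDensity fun x => ENNReal.ofReal (h x) := by
      ext s hs
      have hs' := hs.inter (measurableSet_Ioi (a := (0 : ℝ)))
      rw [Measure.restrict_apply hs, withDensity_apply _ hs, Measure.restrict_restrict hs,
        hdens _ hs' Set.inter_subset_right, ofReal_integral_eq_lintegral_ofReal
          (hint.mono_set Set.inter_subset_right)]
      exact (ae_restrict_mem hs').mono fun x hx => hh0 x hx.2
    have hmap : Integrable (fun x : ℝ => x) (μ.map X) :=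
      (integrable_map_measure measurable_id.aestronglyMeasurable hXm.aemeasurable).2 hXint
    have htoReal : ∀ᵐ x ∂(volume.restrict (Set.Ioi (0 : ℝ))),
        x * (ENNReal.ofReal (h x)).toReal = x * h x :=
      (ae_restrict_mem measurableSet_Ioi).mono fun x hx => by
        rw [ENNReal.toReal_ofReal (hh0 x hx)]
    have hfin : ∀ᵐ x ∂(volume.restrict (Set.Ioi (0 : ℝ))), ENNReal.ofReal (h x) < ⊤ :=
      ae_of_all _ fun x => ENNReal.ofReal_lt_top
    have hxint : IntegrableOn (fun x => x * h x) (Set.Ioi 0) := by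
      have := hmap.integrableOn (s := Set.Ioi 0)
      rw [IntegrableOn, hrestrict,
        integrable_withDensity_iff hhm.ennreal_ofReal hfin] at this
      exact this.congr htoReal
    have hmean : ∫ ω, X ω ∂μ = ∫ x in Set.Ioi 0, x * h x := by
      rw [← integral_map (f := fun x : ℝ => x) hXm.aemeasurable
        measurable_id.aestronglyMeasurable, ← setIntegral_eq_integral_of_ae_compl_eq_zero
        (s := Set.Ioi 0), hrestrict, integral_withDensity_eq_integral_toReal_smul
        hhm.ennreal_ofReal hfin]
      · refine integral_congr_ae (htoReal.mono fun x hx => ?_)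
        simpa [mul_comm] using hx
      · have : ∀ᵐ x ∂(μ.map X), 0 ≤ x := (ae_map_iff hXm.aemeasurable measurableSet_Ici).2 hX0
        exact this.mono fun x hx hx' => le_antisymm (not_lt.1 hx') hx
    rw [hmean, measureReal_def, hdens _ measurableSet_Ici hsub, ENNReal.toReal_ofReal
      (setIntegral_nonneg measurableSet_Ici fun x hx => hh0 x (hsub hx))]
    exact two_mul_setIntegral_Ici_le_of_antitoneOn hmono hh0 hint hxint ht
  · have hzero : μ.map X (Set.Ioi 0) = 0 := by
      rw [hdens _ measurableSet_Ioi subset_rfl, integral_undef hint, ENNReal.ofReal_zero]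
    rw [measureReal_def, measure_mono_null hsub hzero]
    simpa using integral_nonneg_of_ae hX0

/-- **Proposition.** Let `E` be an e-variable that is first-order stochastically smaller
than some e-variable `E'` whose distribution has a decreasing density on `(0,∞)` (condition
(D')).  Then `P = min (1/(2E)) 1` is a p-variable, equivalently `ℙ(2E ≥ 1/α) ≤ α` for all
`α ∈ (0,1)`. -/
theorem min_inv_two_e_is_pVar_of_decreasing_density_dominating
    {Ω : Type*} [MeasurableSpace Ω] (μ : Measure Ω) [IsProbabilityMeasure μ]
    (E E' : Ω → ℝ) (hEm : Measurable E) (hE'm : Measurable E')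
    (hE0 : ∀ᵐ ω ∂μ, 0 ≤ E ω) (hE'0 : ∀ᵐ ω ∂μ, 0 ≤ E' ω)
    (hEint : Integrable E μ) (hE'int : Integrable E' μ)
    (hEe : ∫ ω, E ω ∂μ ≤ 1) (hE'e : ∫ ω, E' ω ∂μ ≤ 1)
    (hst : ∀ f : ℝ → ℝ, Monotone f → Integrable (fun ω => f (E ω)) μ →
      Integrable (fun ω => f (E' ω)) μ → ∫ ω, f (E ω) ∂μ ≤ ∫ ω, f (E' ω) ∂μ)
    (h : ℝ → ℝ) (hhm : Measurable h) (hmono : AntitoneOn h (Set.Ioi 0))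
    (hh0 : ∀ x ∈ Set.Ioi (0:ℝ), 0 ≤ h x)
    (hdens : ∀ s : Set ℝ, MeasurableSet s → s ⊆ Set.Ioi 0 →
      μ.map E' s = ENNReal.ofReal (∫ x in s, h x)) :
    ∀ α ∈ Set.Ioo (0:ℝ) 1, μ {ω | 1/α ≤ 2 * E ω} ≤ ENNReal.ofReal α := by
  rintro α ⟨hα, -⟩
  set t : ℝ := 1 / (2 * α) with htdef
  have ht : 0 < t := by positivity
  have hset : {ω | 1 / α ≤ 2 * E ω} = E ⁻¹' Set.Ici t := by
    ext ω
    have : t = 1 / α / 2 := by rw [htdef, div_div, mul_comm]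
    simp only [Set.mem_ofPred_eq, Set.mem_preimage, Set.mem_Ici, this]
    constructor <;> intro <;> linarith
  have hindicator (X : Ω → ℝ) : (fun ω => (Set.Ici t).indicator (fun _ => (1 : ℝ)) (X ω))
      = (X ⁻¹' Set.Ici t).indicator fun _ => (1 : ℝ) := rfl
  have hindint {X : Ω → ℝ} (hX : Measurable X) :
      Integrable (fun ω => (Set.Ici t).indicator (fun _ => (1 : ℝ)) (X ω)) μ := by
    rw [hindicator]
    exact (integrable_const 1).indicator (hX measurableSet_Ici)
  have hindmono : Monotone ((Set.Ici t).indicator fun _ => (1 : ℝ)) := by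
    intro x y hxy
    simp only [Set.indicator_apply, Set.mem_Ici]
    split_ifs <;> linarith
  have hdom := hst _ hindmono (hindint hEm) (hindint hE'm)
  rw [hindicator, hindicator, integral_indicator_const _ (hEm measurableSet_Ici),
    integral_indicator_const _ (hE'm measurableSet_Ici), smul_eq_mul, smul_eq_mul, mul_one,
    mul_one, ← map_measureReal_apply hE'm measurableSet_Ici] at hdom
  have hbound := (two_mul_measureReal_le_integral_of_antitoneOn_density hE'm hE'0 hE'int hhm
    hmono hh0 hdens ht).trans hE'e
  have htα : 2 * t * α = 1 := by rw [htdef]; field_simp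
  have hle : μ.real (E ⁻¹' Set.Ici t) ≤ α := by
    refine hdom.trans ?_
    rw [← htα] at hbound
    exact le_of_mul_le_mul_left hbound (by positivity)
  rw [hset, ← ofReal_measureReal]
  exact ENNReal.ofReal_le_ofReal hle
end
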